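/- Let (s,u) be a solution of problem (P) with initial data (s₀,φ) ∈ W, and let T_m denote its maximal existence time. If T_m < ∞, then: sup_{t∈(T_m/2,T_m)} (T_m − t)^{1/(2(p−1))} u(t,0) < ∞; for every δ ∈ (0,s₀), sup_{t∈(T_m/2,T_m)} ‖u(t)‖_{L^∞(δ,s(t))} < ∞; and lim_{t↗T_m} s(t) < ∞. -/

import Mathlib

open Set MeasureTheory Filter Topology Real
open scoped ENNReal

noncomputable section

/-- `(s₀, φ)` belongs to the class `W`: `s₀ ∈ (0,∞)`, `φ` is Lipschitz on `[0,s₀]`,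
not identically zero, nonnegative there, and vanishes at `s₀`. -/
def memW (s₀ : ℝ) (φ : ℝ → ℝ) : Prop :=
  0 < s₀ ∧ (∃ K : NNReal, LipschitzOnWith K φ (Icc 0 s₀)) ∧
    (∃ x ∈ Icc 0 s₀, φ x ≠ 0) ∧ (∀ x ∈ Icc 0 s₀, 0 ≤ φ x) ∧ φ s₀ = 0

/-- `(s,u)` is a solution of the one-phase Stefan problem (P) on `(0,T]` (finite `T`)
with exponent `p` and initial data `(s₀,φ)`. -/
structure IsSolOn (p s₀ : ℝ) (φ : ℝ → ℝ) (T : ℝ) (s : ℝ → ℝ) (u : ℝ → ℝ → ℝ) : Prop where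
  T_pos : 0 < T
  s_cont : ContinuousOn s (Icc 0 T)
  s_diff : ∀ t ∈ Ioc 0 T, DifferentiableAt ℝ s t
  s_deriv_cont : ContinuousOn (deriv s) (Ioc 0 T)
  s_pos : ∀ t ∈ Icc 0 T, 0 < s t
  ut_diff : ∀ t ∈ Ioc 0 T, ∀ x ∈ Ioo 0 (s t), DifferentiableAt ℝ (fun τ => u τ x) t
  ux_diff : ∀ t ∈ Ioc 0 T, ∀ x ∈ Ioo 0 (s t), DifferentiableAt ℝ (u t) x
  uxx_diff : ∀ t ∈ Ioc 0 T, ∀ x ∈ Ioo 0 (s t), DifferentiableAt ℝ (deriv (u t)) x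
  ut_cont : ContinuousOn (fun q : ℝ × ℝ => deriv (fun τ => u τ q.2) q.1)
      {q : ℝ × ℝ | q.1 ∈ Ioc 0 T ∧ q.2 ∈ Ioo 0 (s q.1)}
  uxx_cont : ContinuousOn (fun q : ℝ × ℝ => deriv (deriv (u q.1)) q.2)
      {q : ℝ × ℝ | q.1 ∈ Ioc 0 T ∧ q.2 ∈ Ioo 0 (s q.1)}
  ux_cont : ContinuousOn (fun q : ℝ × ℝ => deriv (u q.1) q.2)
      {q : ℝ × ℝ | q.1 ∈ Ioc 0 T ∧ q.2 ∈ Icc 0 (s q.1)}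
  u_cont : ContinuousOn (fun q : ℝ × ℝ => u q.1 q.2)
      {q : ℝ × ℝ | q.1 ∈ Icc 0 T ∧ q.2 ∈ Icc 0 (s q.1)}
  u_nonneg : ∀ t ∈ Icc 0 T, ∀ x ∈ Icc 0 (s t), 0 ≤ u t x
  heat : ∀ t ∈ Ioc 0 T, ∀ x ∈ Ioo 0 (s t),
      deriv (fun τ => u τ x) t = deriv (deriv (u t)) x
  bc_zero : ∀ t ∈ Ioc 0 T, -deriv (u t) 0 = u t 0 ^ p
  bc_free : ∀ t ∈ Ioc 0 T, u t (s t) = 0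
  stefan : ∀ t ∈ Ioc 0 T, deriv s t = -deriv (u t) (s t)
  init : ∀ x ∈ Icc 0 s₀, u 0 x = φ x
  init_s : s 0 = s₀

/-- `(s,u)` is a global-in-time solution of problem (P). -/
def IsGlobalSol (p s₀ : ℝ) (φ : ℝ → ℝ) (s : ℝ → ℝ) (u : ℝ → ℝ → ℝ) : Prop :=
  ∀ T : ℝ, 0 < T → IsSolOn p s₀ φ T s u

/-- `Tm ∈ (0,∞]` is the maximal existence time of the solution `(s,u)` of (P) with
initial data `(s₀,φ)`: the solution exists on `(0,T]` for every `T < Tm`, and for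
`T > Tm` problem (P) admits no solution on `(0,T]`. -/
def IsMaxSol (p s₀ : ℝ) (φ : ℝ → ℝ) (Tm : ℝ≥0∞) (s : ℝ → ℝ) (u : ℝ → ℝ → ℝ) : Prop :=
  0 < Tm ∧
    (∀ T : ℝ, 0 < T → ENNReal.ofReal T < Tm → IsSolOn p s₀ φ T s u) ∧
    (∀ T : ℝ, Tm < ENNReal.ofReal T → ¬∃ σ v, IsSolOn p s₀ φ T σ v)

/-- The sup norm `‖u(t)‖_{L^∞(0,s(t))}`. -/
def supNorm (s : ℝ → ℝ) (u : ℝ → ℝ → ℝ) (t : ℝ) : ℝ :=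
  sSup (u t '' Ioo 0 (s t))

/-- The `L¹` norm `‖u(t)‖_{L¹(0,s(t))}` of the nonnegative function `u(t,·)`. -/
def L1Norm (s : ℝ → ℝ) (u : ℝ → ℝ → ℝ) (t : ℝ) : ℝ :=
  ∫ x in (0:ℝ)..(s t), u t x

/-- The energy `E(s(t),u(t))`. -/
def energy (p : ℝ) (s : ℝ → ℝ) (u : ℝ → ℝ → ℝ) (t : ℝ) : ℝ :=
  1 / 2 * (∫ x in (0:ℝ)..(s t), (deriv (u t) x) ^ 2) - u t 0 ^ (p + 1) / (p + 1)

section partA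


lemma aux_cs {f : ℝ → ℝ} (hf : Continuous f) {a b : ℝ} (hab : a ≤ b) :
    (∫ x in a..b, f x) ^ 2 ≤ (b - a) * ∫ x in a..b, f x ^ 2 := by
  rcases hab.eq_or_lt with rfl | h
  · simp
  set I := ∫ x in a..b, f x with hI
  have h0 : 0 ≤ ∫ x in a..b, ((b - a) * f x - I) ^ 2 :=
    intervalIntegral.integral_nonneg hab (fun x _ => sq_nonneg _)
  have h1 : ∫ x in a..b, ((b - a) * f x - I) ^ 2 =
      (b - a) ^ 2 * (∫ x in a..b, f x ^ 2) - 2 * (b - a) * I * I + (b - a) * I ^ 2 := by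
    have e : ∀ x, ((b - a) * f x - I) ^ 2 = (b - a) ^ 2 * f x ^ 2 - 2 * (b - a) * I * f x + I ^ 2 := by
      intro x; ring
    simp_rw [e]
    rw [intervalIntegral.integral_add, intervalIntegral.integral_sub,
      intervalIntegral.integral_const_mul, intervalIntegral.integral_const_mul,
      intervalIntegral.integral_const, ← hI]
    · simp
    all_goals apply Continuous.intervalIntegrable; fun_prop
  rw [h1] at h0
  have hp : 0 < b - a := by linarith
  have : 0 ≤ (b - a) * ((b - a) * (∫ x in a..b, f x ^ 2) - I ^ 2) := by nlinarith
  have := nonneg_of_mul_nonneg_right this hp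
  linarith

lemma aux_cs' {f : ℝ → ℝ} {a b : ℝ} (hf : ContinuousOn f (Icc a b)) (hab : a ≤ b) :
    (∫ x in a..b, f x) ^ 2 ≤ (b - a) * ∫ x in a..b, f x ^ 2 := by
  have := aux_cs (f := IccExtend hab ((Icc a b).domRestrict f)) (by
    apply Continuous.Icc_extend'; exact hf.domRestrict) hab
  have e : ∀ x ∈ uIcc a b, IccExtend hab ((Icc a b).domRestrict f) x = f x := by
    intro x hx
    rw [uIcc_of_le hab] at hx
    rw [IccExtend_of_mem _ _ hx]; rfl
  have e2 : ∫ x in a..b, IccExtend hab ((Icc a b).domRestrict f) x ^ 2 = ∫ x in a..b, f x ^ 2 := by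
    apply intervalIntegral.integral_congr
    intro x hx; simp only [e x hx]
  rw [intervalIntegral.integral_congr e, e2] at this
  exact this

lemma aux_tube {G : ℝ × ℝ → ℝ} (hG : Continuous G) {a b ε : ℝ}
    (h0 : ∀ t ∈ Icc a b, G (0, t) < ε) :
    ∃ h₀ > 0, ∀ h ∈ Ioo 0 h₀, ∀ t ∈ Icc a b, G (h, t) < ε := by
  obtain ⟨U, V, hU, hV, h1, h2, h3⟩ := generalized_tube_lemma (s := ({0} : Set ℝ)) (t := Icc a b)
    isCompact_singleton isCompact_Icc (n := {z | G z < ε}) (isOpen_lt hG continuous_const) (by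
      rintro ⟨h, t⟩ ⟨rfl, ht⟩
      exact h0 t ht)
  obtain ⟨r, hr, hrU⟩ := Metric.isOpen_iff.1 hU 0 (h1 rfl)
  refine ⟨r, hr, fun h hh t ht => ?_⟩
  have : ((h, t) : ℝ × ℝ) ∈ U ×ˢ V := ⟨hrU (by
    simp [abs_of_pos hh.1, hh.2]), h2 ht⟩
  exact h3 this

lemma aux_mul {A c : ℝ → ℝ} {A' t : ℝ} (hA : HasDerivAt A A' t) (h0 : A t = 0)
    (hc : ContinuousAt c t) : HasDerivAt (fun τ => A τ * c τ) (A' * c t) t := by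
  rw [hasDerivAt_iff_tendsto_slope] at hA ⊢
  have := hA.mul (hc.tendsto.mono_left (nhdsWithin_le_nhds (s := {t}ᶜ)))
  refine this.congr fun y => ?_
  simp [slope_def_field, h0]; ring

lemma aux_sub (f : ℝ → ℝ) (t h : ℝ) :
    h * ∫ θ in (0:ℝ)..1, f (t + θ * h) = ∫ τ in t..(t + h), f τ := by
  have := intervalIntegral.mul_integral_comp_add_mul (a := 0) (b := 1) (f := f) h t
  simp only [mul_zero, add_zero, mul_one] at this
  rw [← this]
  simp_rw [mul_comm h]

lemma aux_leib {f ft : ℝ → ℝ → ℝ} (hf : Continuous (fun z : ℝ × ℝ => f z.1 z.2))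
    (hft : Continuous (fun z : ℝ × ℝ => ft z.1 z.2))
    (hd : ∀ t x, HasDerivAt (fun τ => f τ x) (ft t x) t) {S : ℝ → ℝ} {S' t : ℝ}
    (hSc : Continuous S)
    (hS : HasDerivAt S S' t) :
    HasDerivAt (fun τ => ∫ x in (0:ℝ)..(S τ), f τ x)
      (S' * f t (S t) + ∫ x in (0:ℝ)..(S t), ft t x) t := by
  have key : ∀ τ, ∫ x in (0:ℝ)..(S τ), f τ x =
      (∫ x in (0:ℝ)..(S t), f t x)
      + (τ - t) * (∫ x in (0:ℝ)..(S t), ∫ θ in (0:ℝ)..1, ft (t + θ * (τ - t)) x)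
      + (S τ - S t) * ∫ θ in (0:ℝ)..1, f τ (S t + θ * (S τ - S t)) := by
    intro τ
    have e1 : ∫ x in (0:ℝ)..(S τ), f τ x = (∫ x in (0:ℝ)..(S t), f τ x) + ∫ x in (S t)..(S τ), f τ x := by
      rw [intervalIntegral.integral_add_adjacent_intervals] <;>
      · apply Continuous.intervalIntegrable
        exact hf.comp (by fun_prop : Continuous fun x : ℝ => (τ, x))
    have e2 : (S τ - S t) * ∫ θ in (0:ℝ)..1, f τ (S t + θ * (S τ - S t)) = ∫ x in (S t)..(S τ), f τ x := by
      rw [aux_sub]; congr 1; ring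
    have e3 : ∀ x, f τ x = f t x + (τ - t) * ∫ θ in (0:ℝ)..1, ft (t + θ * (τ - t)) x := by
      intro x
      rw [aux_sub (fun τ => ft τ x), add_sub_cancel,
        intervalIntegral.integral_eq_sub_of_hasDerivAt (fun y _ => hd y x)]
      · ring
      · apply Continuous.intervalIntegrable
        exact hft.comp (by fun_prop : Continuous fun y : ℝ => (y, x))
    rw [e1, e2]
    congr 1
    rw [← intervalIntegral.integral_const_mul, ← intervalIntegral.integral_add]
    · exact intervalIntegral.integral_congr (fun x _ => e3 x)
    · apply Continuous.intervalIntegrable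
      exact hf.comp (by fun_prop : Continuous fun x : ℝ => (t, x))
    · apply Continuous.intervalIntegrable
      apply Continuous.mul continuous_const
      apply intervalIntegral.continuous_parametric_intervalIntegral_of_continuous'
      exact hft.comp (by fun_prop : Continuous fun z : ℝ × ℝ => (t + z.2 * (τ - t), z.1))
  rw [show (fun τ => ∫ x in (0:ℝ)..(S τ), f τ x) = _ from funext key]
  have h1 := aux_mul (A := fun τ => τ - t) (A' := 1) (t := t)
    (c := fun τ => ∫ x in (0:ℝ)..(S t), ∫ θ in (0:ℝ)..1, ft (t + θ * (τ - t)) x)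
    ((hasDerivAt_id t).sub_const t) (by simp) (by
      apply Continuous.continuousAt
      apply intervalIntegral.continuous_parametric_intervalIntegral_of_continuous'
      apply intervalIntegral.continuous_parametric_intervalIntegral_of_continuous'
      exact hft.comp (by fun_prop :
        Continuous fun z : (ℝ × ℝ) × ℝ => (t + z.2 * (z.1.1 - t), z.1.2)))
  have h2 := aux_mul (A := fun τ => S τ - S t) (A' := S') (t := t)
    (c := fun τ => ∫ θ in (0:ℝ)..1, f τ (S t + θ * (S τ - S t)))
    (hS.sub_const _) (by simp) (by
      apply Continuous.continuousAt
      apply intervalIntegral.continuous_parametric_intervalIntegral_of_continuous'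
      exact hf.comp (by fun_prop :
        Continuous fun z : ℝ × ℝ => (z.1, S t + z.2 * (S z.1 - S t))))
  have h3 := (h1.const_add (∫ x in (0:ℝ)..(S t), f t x)).add h2
  refine h3.congr_deriv ?_
  simp
  ring


end partA

section partB


/-- Clamped weak form of the problem on the time interval `[α, β]`. -/
structure Wk (p α β : ℝ) (S : ℝ → ℝ) (w q : ℝ → ℝ → ℝ) : Prop where
  lt : α < β
  Sc : Continuous S
  Spos : ∀ t, 0 < S t
  Smono : Monotone S
  Sd : ∀ t ∈ Ioo α β, HasDerivAt S (-q t (S t)) t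
  Sq : ∀ t, 0 ≤ -q t (S t)
  wc : Continuous (fun z : ℝ × ℝ => w z.1 z.2)
  qc : Continuous (fun z : ℝ × ℝ => q z.1 z.2)
  H1 : ∀ t, ∀ x ∈ Icc 0 (S t), ∀ y ∈ Icc 0 (S t), ∫ ξ in x..y, q t ξ = w t y - w t x
  HI : ∀ t₁ ∈ Icc α β, ∀ t₂ ∈ Icc α β, t₁ ≤ t₂ → ∀ x ∈ Icc 0 (S t₁),
    ∫ y in (0:ℝ)..x, (w t₂ y - w t₁ y) = ∫ τ in t₁..t₂, (q τ x - q τ 0)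
  bc : ∀ t, -q t 0 = w t 0 ^ p
  w0 : ∀ t, w t (S t) = 0
  wn : ∀ t x, 0 ≤ w t x

/-- time average -/
def QQ (q : ℝ → ℝ → ℝ) (h t x : ℝ) : ℝ := ∫ θ in (0:ℝ)..1, q (t + θ * h) x

/-- time difference quotient -/
def VV (w : ℝ → ℝ → ℝ) (h t x : ℝ) : ℝ := (w (t + h) x - w t x) / h

/-- regularised energy -/
def EE (p : ℝ) (S : ℝ → ℝ) (w q : ℝ → ℝ → ℝ) (h t : ℝ) : ℝ :=
  1 / 2 * (∫ x in (0:ℝ)..(S t), QQ q h t x ^ 2) - QQ w h t 0 ^ (p + 1) / (p + 1)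

lemma QQ_zero (q : ℝ → ℝ → ℝ) (t x : ℝ) : QQ q 0 t x = q t x := by simp [QQ]

lemma QQ_cont {q : ℝ → ℝ → ℝ} (qc : Continuous (fun z : ℝ × ℝ => q z.1 z.2)) :
    Continuous (fun z : ℝ × ℝ × ℝ => QQ q z.1 z.2.1 z.2.2) := by
  unfold QQ
  apply intervalIntegral.continuous_parametric_intervalIntegral_of_continuous'
  exact qc.comp (by fun_prop :
    Continuous fun z : (ℝ × ℝ × ℝ) × ℝ => (z.1.2.1 + z.2 * z.1.1, z.1.2.2))

lemma QQ_comp {q : ℝ → ℝ → ℝ} (qc : Continuous (fun z : ℝ × ℝ => q z.1 z.2))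
    {X : Type*} [TopologicalSpace X] {f g k : X → ℝ} (hf : Continuous f) (hg : Continuous g)
    (hk : Continuous k) : Continuous (fun z => QQ q (f z) (g z) (k z)) :=
  (QQ_cont qc).comp (hf.prodMk (hg.prodMk hk))

lemma two_comp {q : ℝ → ℝ → ℝ} (qc : Continuous (fun z : ℝ × ℝ => q z.1 z.2))
    {X : Type*} [TopologicalSpace X] {f g : X → ℝ} (hf : Continuous f) (hg : Continuous g) :
    Continuous (fun z => q (f z) (g z)) :=
  qc.comp (hf.prodMk hg)

lemma QQ_eq (q : ℝ → ℝ → ℝ) {h : ℝ} (hh : h ≠ 0) (t x : ℝ) :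
    QQ q h t x = (∫ τ in t..(t + h), q τ x) / h := by
  rw [← aux_sub (fun τ => q τ x), QQ, mul_div_cancel_left₀ _ hh]

lemma QQ_deriv {q : ℝ → ℝ → ℝ} (qc : Continuous (fun z : ℝ × ℝ => q z.1 z.2)) {h : ℝ} (hh : h ≠ 0)
    (t x : ℝ) : HasDerivAt (fun τ => QQ q h τ x) ((q (t + h) x - q t x) / h) t := by
  have c : Continuous fun τ => q τ x := two_comp qc continuous_id continuous_const
  have e : (fun τ => QQ q h τ x) =
      fun τ => ((∫ r in (0:ℝ)..(τ + h), q r x) - ∫ r in (0:ℝ)..τ, q r x) / h := by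
    funext τ
    rw [QQ_eq q hh, intervalIntegral.integral_interval_sub_left] <;> exact c.intervalIntegrable _ _
  rw [e]
  have h1 : HasDerivAt (fun τ => ∫ r in (0:ℝ)..(τ + h), q r x) (q (t + h) x) t :=
    HasDerivAt.comp_add_const t h (c.integral_hasStrictDerivAt 0 (t + h)).hasDerivAt
  exact (h1.sub (c.integral_hasStrictDerivAt 0 t).hasDerivAt).div_const h

variable {p α β : ℝ} {S : ℝ → ℝ} {w q : ℝ → ℝ → ℝ}

lemma VV_cont (H : Wk p α β S w q) (h t : ℝ) : Continuous (VV w h t) := by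
  unfold VV
  exact ((two_comp H.wc continuous_const continuous_id).sub
    (two_comp H.wc continuous_const continuous_id)).div_const h

lemma VV_int (H : Wk p α β S w q) {h t : ℝ} (hh : 0 < h) (ht : α ≤ t) (hth : t + h ≤ β)
    {x : ℝ} (hx : x ∈ Icc 0 (S t)) :
    ∫ y in (0:ℝ)..x, VV w h t y = QQ q h t x - QQ q h t 0 := by
  have c : ∀ x, Continuous fun τ => q τ x := fun x => two_comp H.qc continuous_id continuous_const
  have := H.HI t ⟨ht, by linarith⟩ (t + h) ⟨by linarith, hth⟩ (by linarith) x hx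
  rw [QQ_eq q hh.ne', QQ_eq q hh.ne', ← sub_div, ← intervalIntegral.integral_sub
    ((c x).intervalIntegrable _ _) ((c 0).intervalIntegrable _ _), ← this]
  unfold VV
  rw [intervalIntegral.integral_div]

lemma EE_deriv (hp : 1 < p) (H : Wk p α β S w q) {h t : ℝ} (hh : 0 < h) (ht : α < t)
    (hth : t + h < β) :
    HasDerivAt (EE p S w q h) (1 / 2 * (-q t (S t) * QQ q h t (S t) ^ 2)
      + QQ q h t (S t) * VV w h t (S t) + (-QQ q h t 0 - QQ w h t 0 ^ p) * VV w h t 0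
      - ∫ x in (0:ℝ)..(S t), VV w h t x ^ 2) t := by
  have hS := H.Sd t ⟨ht, by linarith⟩
  have h1 := aux_leib (f := fun t x => QQ q h t x ^ 2)
    (ft := fun t x => 2 * QQ q h t x * ((q (t + h) x - q t x) / h))
    ((QQ_comp H.qc continuous_const continuous_fst continuous_snd).pow 2)
    ((continuous_const.mul (QQ_comp H.qc continuous_const continuous_fst continuous_snd)).mul
      (((two_comp H.qc (by fun_prop) (by fun_prop)).sub H.qc).div_const h))
    (fun t x => by
      refine ((QQ_deriv H.qc hh.ne' t x).pow 2).congr_deriv ?_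
      simp) H.Sc hS
  have hm := QQ_deriv H.wc hh.ne' t 0
  have h2 := (hm.rpow_const (p := p + 1) (Or.inr (by linarith))).div_const (p + 1)
  have h3 := (h1.const_mul (1 / 2)).sub h2
  refine h3.congr_deriv ?_
  have qx : Continuous (QQ q h t) := QQ_comp H.qc continuous_const continuous_const continuous_id
  have vx := VV_cont H h t
  have qtx : Continuous fun x => (q (t + h) x - q t x) / h :=
    ((two_comp H.qc continuous_const continuous_id).sub
      (two_comp H.qc continuous_const continuous_id)).div_const h
  have dQ : ∀ x ∈ Ioo 0 (S t), HasDerivAt (QQ q h t) (VV w h t x) x := by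
    intro x hx
    have e : QQ q h t =ᶠ[𝓝 x] fun x => (∫ y in (0:ℝ)..x, VV w h t y) + QQ q h t 0 := by
      filter_upwards [Ioo_mem_nhds hx.1 hx.2] with y hy
      rw [VV_int H hh ht.le hth.le ⟨hy.1.le, hy.2.le⟩]; ring
    exact HasDerivAt.congr_of_eventuallyEq
      ((vx.integral_hasStrictDerivAt 0 x).hasDerivAt.add_const _) e
  have dw : ∀ τ, ∀ x ∈ Ioo 0 (S τ), HasDerivAt (w τ) (q τ x) x := by
    intro τ x hx
    have e : w τ =ᶠ[𝓝 x] fun x => (∫ y in (0:ℝ)..x, q τ y) + w τ 0 := by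
      filter_upwards [Ioo_mem_nhds hx.1 hx.2] with y hy
      rw [H.H1 τ 0 ⟨le_rfl, (H.Spos τ).le⟩ y ⟨hy.1.le, hy.2.le⟩]; ring
    have c : Continuous (q τ) := two_comp H.qc continuous_const continuous_id
    exact HasDerivAt.congr_of_eventuallyEq
      ((c.integral_hasStrictDerivAt 0 x).hasDerivAt.add_const _) e
  have dV : ∀ x ∈ Ioo 0 (S t), HasDerivAt (VV w h t) ((q (t + h) x - q t x) / h) x := by
    intro x hx
    have := H.Smono (show t ≤ t + h by linarith)
    exact ((dw (t + h) x ⟨hx.1, by linarith [hx.2]⟩).sub (dw t x hx)).div_const h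
  have ibp := intervalIntegral.integral_eq_sub_of_hasDerivAt_of_le (a := 0) (b := S t)
    (f := fun x => QQ q h t x * VV w h t x)
    (f' := fun x => VV w h t x * VV w h t x + QQ q h t x * ((q (t + h) x - q t x) / h))
    (H.Spos t).le (qx.mul vx).continuousOn
    (fun x hx => (dQ x hx).mul (dV x hx))
    (((vx.mul vx).add (qx.mul qtx)).intervalIntegrable _ _)
  have ii1 : IntervalIntegrable (fun x => VV w h t x * VV w h t x) volume 0 (S t) :=
    (vx.mul vx).intervalIntegrable _ _
  have ii2 : IntervalIntegrable (fun x => QQ q h t x * ((q (t + h) x - q t x) / h)) volume 0 (S t) :=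
    (qx.mul qtx).intervalIntegrable _ _
  rw [intervalIntegral.integral_add ii1 ii2] at ibp
  have e1 : ∫ x in (0:ℝ)..(S t), 2 * QQ q h t x * ((q (t + h) x - q t x) / h)
      = 2 * ∫ x in (0:ℝ)..(S t), QQ q h t x * ((q (t + h) x - q t x) / h) := by
    rw [← intervalIntegral.integral_const_mul]; congr 1; funext x; ring
  have e2 : ∫ x in (0:ℝ)..(S t), VV w h t x ^ 2 = ∫ x in (0:ℝ)..(S t), VV w h t x * VV w h t x := by
    congr 1; funext x; ring
  rw [e1, e2]
  have hp1 : p + 1 ≠ 0 := by linarith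
  have e3 : VV w h t 0 = (w (t + h) 0 - w t 0) / h := rfl
  rw [← e3, add_sub_cancel_right, show VV w h t 0 * (p + 1) * QQ w h t 0 ^ p / (p + 1)
    = VV w h t 0 * QQ w h t 0 ^ p by field_simp]
  linear_combination ibp

lemma R1_small (H : Wk p α β S w q) {a b ε : ℝ} (hε : 0 < ε) (ha : α < a) (hb : b < β) :
    ∃ h₀ > 0, ∀ h ∈ Ioo 0 h₀, ∀ t ∈ Icc a b,
      1 / 2 * (-q t (S t) * QQ q h t (S t) ^ 2) + QQ q h t (S t) * VV w h t (S t) < ε := by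
  have Sc := H.Sc
  have σc : Continuous (fun τ => -q τ (S τ)) := (two_comp H.qc continuous_id H.Sc).neg
  obtain ⟨h₁, h₁p, hh⟩ := aux_tube (G := fun z : ℝ × ℝ =>
      1 / 2 * (-q z.2 (S z.2) * QQ q z.1 z.2 (S z.2) ^ 2) + QQ q z.1 z.2 (S z.2) *
        ((∫ θ in (0:ℝ)..1, -q (z.2 + θ * z.1) (S (z.2 + θ * z.1))) *
          (∫ θ in (0:ℝ)..1, -q (z.2 + z.1) (S z.2 + θ * (S (z.2 + z.1) - S z.2)))))
    (a := a) (b := b) (ε := ε) (by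
      have c1 : Continuous fun z : ℝ × ℝ => QQ q z.1 z.2 (S z.2) :=
        QQ_comp H.qc continuous_fst continuous_snd (by fun_prop)
      have c2 : Continuous fun z : ℝ × ℝ => -q z.2 (S z.2) := σc.comp continuous_snd
      have c3 : Continuous fun z : ℝ × ℝ =>
          ∫ θ in (0:ℝ)..1, -q (z.2 + θ * z.1) (S (z.2 + θ * z.1)) := by
        apply intervalIntegral.continuous_parametric_intervalIntegral_of_continuous'
        exact σc.comp (by fun_prop : Continuous fun z : (ℝ × ℝ) × ℝ => z.1.2 + z.2 * z.1.1)
      have c4 : Continuous fun z : ℝ × ℝ =>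
          ∫ θ in (0:ℝ)..1, -q (z.2 + z.1) (S z.2 + θ * (S (z.2 + z.1) - S z.2)) := by
        apply intervalIntegral.continuous_parametric_intervalIntegral_of_continuous'
        apply Continuous.neg
        exact H.qc.comp (by fun_prop : Continuous fun z : (ℝ × ℝ) × ℝ =>
          (z.1.2 + z.1.1, S z.1.2 + z.2 * (S (z.1.2 + z.1.1) - S z.1.2)))
      exact (continuous_const.mul (c2.mul (c1.pow 2))).add (c1.mul (c3.mul c4)))
    (by
      intro t ht
      simp only [QQ_zero, mul_zero, add_zero, sub_self, intervalIntegral.integral_const, sub_zero,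
        one_smul]
      have := H.Sq t
      set σ := -q t (S t) with hσ
      have e : q t (S t) = -σ := by simp [hσ]
      rw [e]
      have : 0 ≤ σ ^ 3 := by positivity
      nlinarith)
  refine ⟨min h₁ (β - b), lt_min h₁p (by linarith), fun h hhm t ht => ?_⟩
  have l1 : h < h₁ := lt_of_lt_of_le hhm.2 (min_le_left _ _)
  have l2 : h < β - b := lt_of_lt_of_le hhm.2 (min_le_right _ _)
  have := hh h ⟨hhm.1, l1⟩ t ht
  simp only at this
  convert this using 3
  have hSS := H.Smono (show t ≤ t + h by linarith [hhm.1])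
  have e1 : ∫ θ in (0:ℝ)..1, -q (t + θ * h) (S (t + θ * h)) = (S (t + h) - S t) / h := by
    have := aux_sub (fun τ => -q τ (S τ)) t h
    rw [intervalIntegral.integral_eq_sub_of_hasDerivAt (f := S) (f' := fun τ => -q τ (S τ))
      _ (σc.intervalIntegrable _ _)] at this
    · rw [← this, mul_div_cancel_left₀ _ hhm.1.ne']
    · intro x hx
      rw [uIcc_of_le (by linarith [hhm.1])] at hx
      exact H.Sd x ⟨by linarith [hx.1, ht.1], by linarith [hx.2, ht.2]⟩
  have e2 : (S (t + h) - S t) * ∫ θ in (0:ℝ)..1, -q (t + h) (S t + θ * (S (t + h) - S t))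
      = w (t + h) (S t) := by
    rw [aux_sub (fun x => -q (t + h) x), intervalIntegral.integral_neg, add_sub_cancel,
      H.H1 (t + h) (S t) ⟨(H.Spos t).le, hSS⟩ (S (t + h)) ⟨(H.Spos _).le, le_rfl⟩, H.w0]
    ring
  rw [e1, VV, H.w0 t, ← e2]
  ring

lemma psi_small (hp : 1 < p) (B : ℝ) {ε : ℝ} (hε : 0 < ε) : ∃ δ > 0, ∀ y ∈ Icc 0 B, ∀ z ∈ Icc 0 B,
    |y - z| < δ → |y ^ p - z ^ p - p * z ^ (p - 1) * (y - z)| ≤ ε * |y - z| := by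
  have c : Continuous fun y : ℝ => p * y ^ (p - 1) :=
    continuous_const.mul (Real.continuous_rpow_const (by linarith))
  have uc := (isCompact_Icc (a := (0:ℝ)) (b := B)).uniformContinuousOn_of_continuous c.continuousOn
  rw [Metric.uniformContinuousOn_iff] at uc
  obtain ⟨δ, hδ, h⟩ := uc ε hε
  refine ⟨δ, hδ, fun y hy z hz hyz => ?_⟩
  have := Convex.norm_image_sub_le_of_norm_hasDerivWithin_le
    (f := fun y => y ^ p - p * z ^ (p - 1) * y) (f' := fun y => p * y ^ (p - 1) - p * z ^ (p - 1))
    (C := ε) (s := Icc 0 B ∩ Metric.ball z δ) (x := z) (y := y)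
    (fun x _ => by
      have h1 := Real.hasDerivAt_rpow_const (x := x) (p := p) (Or.inr hp.le)
      have h2 := (hasDerivAt_id x).const_mul (p * z ^ (p - 1))
      refine ((h1.sub h2).congr_deriv ?_).hasDerivWithinAt
      simp)
    (fun x hx => (h x hx.1 z hz hx.2).le)
    ((convex_Icc _ _).inter (convex_ball _ _)) ⟨hz, Metric.mem_ball_self hδ⟩ ⟨hy, hyz⟩
  rw [Real.norm_eq_abs, Real.norm_eq_abs] at this
  refine le_trans (le_of_eq ?_) this
  congr 1; ring


end partB

section partC

variable {p α β : ℝ} {S : ℝ → ℝ} {w q : ℝ → ℝ → ℝ}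

lemma bnd_q (H : Wk p α β S w q) : ∃ L > 0, ∀ t ∈ Icc α β, ∀ x ∈ Icc 0 (S α), |q t x| ≤ L := by
  obtain ⟨L, hL⟩ := ((isCompact_Icc (a := α) (b := β)).prod (isCompact_Icc (a := (0:ℝ))
    (b := S α))).exists_bound_of_continuousOn H.qc.continuousOn
  refine ⟨max L 1, by positivity, fun t ht x hx => ?_⟩
  exact (hL (t, x) ⟨ht, hx⟩).trans (le_max_left _ _)

lemma holder (H : Wk p α β S w q) {L : ℝ}
    (hL : ∀ t ∈ Icc α β, ∀ x ∈ Icc 0 (S α), |q t x| ≤ L) {t t' : ℝ} (ht : t ∈ Icc α β)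
    (ht' : t' ∈ Icc α β) (h1 : t ≤ t') {η : ℝ} (hη : 0 < η) (hηS : η ≤ S α)
    (h2 : t' - t ≤ η ^ 2) :
    |w t' 0 - w t 0| ≤ 4 * L * η := by
  have hL0 : 0 ≤ L := (abs_nonneg _).trans (hL t ht 0 ⟨le_rfl, (H.Spos _).le⟩)
  have near : ∀ τ ∈ Icc α β, ∀ y ∈ Icc 0 η, |w τ y - w τ 0| ≤ L * η := by
    intro τ hτ y hy
    have hs := H.Smono hτ.1
    rw [← H.H1 τ 0 ⟨le_rfl, (H.Spos _).le⟩ y ⟨hy.1, by linarith [hy.2]⟩]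
    have := intervalIntegral.norm_integral_le_of_norm_le_const (a := 0) (b := y) (f := q τ) (C := L)
      (fun x hx => by
        rw [uIoc_of_le hy.1] at hx
        exact hL τ hτ x ⟨hx.1.le, by linarith [hx.2, hy.2]⟩)
    rw [Real.norm_eq_abs, sub_zero, abs_of_nonneg hy.1] at this
    exact this.trans (mul_le_mul_of_nonneg_left hy.2 hL0)
  have hs := H.Smono ht.1
  have hi := H.HI t ht t' ht' h1 η ⟨hη.le, by linarith⟩
  have b1 : |∫ y in (0:ℝ)..η, (w t' y - w t y)| ≤ 2 * L * η ^ 2 := by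
    rw [hi]
    have := intervalIntegral.norm_integral_le_of_norm_le_const (a := t) (b := t')
      (f := fun τ => q τ η - q τ 0) (C := 2 * L)
      (fun x hx => by
        rw [uIoc_of_le h1] at hx
        have hx' : x ∈ Icc α β := ⟨by linarith [hx.1, ht.1], by linarith [hx.2, ht'.2]⟩
        have a1 := hL x hx' η ⟨hη.le, hηS⟩
        have a2 := hL x hx' 0 ⟨le_rfl, (H.Spos _).le⟩
        rw [Real.norm_eq_abs]
        refine (abs_sub _ _).trans ?_
        linarith)
    rw [Real.norm_eq_abs, abs_of_nonneg (by linarith : 0 ≤ t' - t)] at this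
    exact this.trans (mul_le_mul_of_nonneg_left h2 (by linarith))
  have cw : ∀ τ, Continuous (w τ) := fun τ => two_comp H.wc continuous_const continuous_id
  have b2 : |∫ y in (0:ℝ)..η, ((w t' y - w t y) - (w t' 0 - w t 0))| ≤ 2 * L * η ^ 2 := by
    have := intervalIntegral.norm_integral_le_of_norm_le_const (a := 0) (b := η)
      (f := fun y => (w t' y - w t y) - (w t' 0 - w t 0)) (C := 2 * L * η)
      (fun y hy => by
        rw [uIoc_of_le hη.le] at hy
        have a1 := near t ht y ⟨hy.1.le, hy.2⟩
        have a2 := near t' ht' y ⟨hy.1.le, hy.2⟩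
        rw [Real.norm_eq_abs, show (w t' y - w t y) - (w t' 0 - w t 0) =
          (w t' y - w t' 0) - (w t y - w t 0) by ring]
        refine (abs_sub _ _).trans ?_
        linarith)
    rw [Real.norm_eq_abs, sub_zero, abs_of_pos hη] at this
    linarith
  have ii : IntervalIntegrable (fun y => w t' y - w t y) volume 0 η :=
    ((cw t').sub (cw t)).intervalIntegrable _ _
  rw [intervalIntegral.integral_sub ii intervalIntegrable_const, intervalIntegral.integral_const,
    sub_zero, smul_eq_mul] at b2
  have b3 : |η * (w t' 0 - w t 0)| ≤ 4 * L * η ^ 2 := by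
    rw [abs_le] at b1 b2 ⊢
    constructor <;> linarith [b1.1, b1.2, b2.1, b2.2]
  rw [abs_mul, abs_of_pos hη] at b3
  have : η * |w t' 0 - w t 0| ≤ η * (4 * L * η) := by linarith
  exact le_of_mul_le_mul_left this hη

lemma R2_small (hp : 1 < p) (H : Wk p α β S w q) {a b ε : ℝ} (hε : 0 < ε) (ha : α < a) (hb : b < β) :
    ∃ h₀ > 0, ∀ h ∈ Ioo 0 h₀, ∀ t ∈ Icc a b,
      (-QQ q h t 0 - QQ w h t 0 ^ p) * VV w h t 0 ≤ ε := by
  obtain ⟨L, hL0, hL⟩ := bnd_q H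
  have cm : Continuous fun τ => w τ 0 := two_comp H.wc continuous_id continuous_const
  obtain ⟨B, hB⟩ := (isCompact_Icc (a := α) (b := β)).exists_bound_of_continuousOn cm.continuousOn
  obtain ⟨δ, hδ, hψ⟩ := psi_small hp (B + 1) (ε := ε / (32 * L ^ 2)) (by positivity)
  set d := min (S α) (min δ 1 / (8 * L)) with hd
  have hd0 : 0 < d := lt_min (H.Spos _) (by positivity)
  have hdS : d ≤ S α := min_le_left _ _
  have hdL : 4 * L * d ≤ min δ 1 / 2 := by
    have : d ≤ min δ 1 / (8 * L) := min_le_right _ _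
    rw [le_div_iff₀ (by positivity)] at this
    linarith
  have hd1 : 4 * L * d < δ := by
    have : min δ 1 ≤ δ := min_le_left _ _
    linarith
  have hd2 : 4 * L * d ≤ 1 := by
    have : min δ 1 ≤ 1 := min_le_right _ _
    linarith
  refine ⟨min (d ^ 2) (β - b), lt_min (by positivity) (by linarith), fun h hh t ht => ?_⟩
  have hh0 := hh.1
  have l1 : h < d ^ 2 := lt_of_lt_of_le hh.2 (min_le_left _ _)
  have l2 : h < β - b := lt_of_lt_of_le hh.2 (min_le_right _ _)
  set η := √h with hηdef
  have hη : 0 < η := Real.sqrt_pos.2 hh0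
  have hη2 : η ^ 2 = h := Real.sq_sqrt hh0.le
  have hηd : η < d := lt_of_pow_lt_pow_left₀ 2 hd0.le (by rw [hη2]; exact l1)
  have htαβ : t ∈ Icc α β := ⟨by linarith [ht.1], by linarith [ht.2]⟩
  have hLη : 4 * L * η ≤ 4 * L * d := by gcongr
  have near : ∀ θ ∈ Icc (0:ℝ) 1, |w (t + θ * h) 0 - w t 0| ≤ 4 * L * η := by
    intro θ hθ
    have t1 : 0 ≤ θ * h := mul_nonneg hθ.1 hh0.le
    have t2 : θ * h ≤ h := by nlinarith [hθ.2]
    exact holder H hL htαβ ⟨by linarith [ht.1], by linarith [ht.2]⟩ (by linarith) hη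
      (by linarith) (by rw [hη2]; linarith)
  have cmt : Continuous fun θ => w (t + θ * h) 0 := cm.comp (by fun_prop)
  have nearQ : |QQ w h t 0 - w t 0| ≤ 4 * L * η := by
    have := intervalIntegral.norm_integral_le_of_norm_le_const (a := 0) (b := 1)
      (f := fun θ => w (t + θ * h) 0 - w t 0) (C := 4 * L * η) (fun θ hθ => by
        rw [uIoc_of_le zero_le_one] at hθ
        exact near θ ⟨hθ.1.le, hθ.2⟩)
    rw [intervalIntegral.integral_sub (cmt.intervalIntegrable _ _) intervalIntegrable_const] at this
    simpa [QQ] using this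
  have m0 : w t 0 ∈ Icc 0 (B + 1) := ⟨H.wn _ _, by
    have := hB t htαβ
    linarith [le_abs_self (w t 0), Real.norm_eq_abs (w t 0)]⟩
  have m1 : w t 0 ≤ B := by
    have := hB t htαβ
    linarith [le_abs_self (w t 0), Real.norm_eq_abs (w t 0)]
  set c := p * (w t 0) ^ (p - 1) with hc
  set e := ε / (32 * L ^ 2) with he
  have he0 : 0 < e := by positivity
  have est : ∀ y, 0 ≤ y → |y - w t 0| ≤ 4 * L * η →
      |y ^ p - w t 0 ^ p - c * (y - w t 0)| ≤ e * (4 * L * η) := by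
    intro y hy hyw
    have := hψ y ⟨hy, by linarith [(abs_le.1 hyw).2]⟩ (w t 0) m0 (by linarith)
    exact this.trans (mul_le_mul_of_nonneg_left hyw he0.le)
  have est1 := est (QQ w h t 0) (intervalIntegral.integral_nonneg zero_le_one (fun θ _ => H.wn _ _)) nearQ
  have cp : Continuous fun θ => w (t + θ * h) 0 ^ p := cmt.rpow_const (fun _ => Or.inr (by linarith))
  have est2 : |-QQ q h t 0 - w t 0 ^ p - c * (QQ w h t 0 - w t 0)| ≤ e * (4 * L * η) := by
    have := intervalIntegral.norm_integral_le_of_norm_le_const (a := 0) (b := 1)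
      (f := fun θ => w (t + θ * h) 0 ^ p - w t 0 ^ p - c * (w (t + θ * h) 0 - w t 0))
      (C := e * (4 * L * η)) (fun θ hθ => by
        rw [uIoc_of_le zero_le_one] at hθ
        exact est _ (H.wn _ _) (near θ ⟨hθ.1.le, hθ.2⟩))
    have i1 : IntervalIntegrable (fun θ => w (t + θ * h) 0 ^ p - w t 0 ^ p) volume 0 1 :=
      (cp.sub continuous_const).intervalIntegrable _ _
    have i2 : IntervalIntegrable (fun θ => c * (w (t + θ * h) 0 - w t 0)) volume 0 1 :=
      (continuous_const.mul (cmt.sub continuous_const)).intervalIntegrable _ _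
    rw [intervalIntegral.integral_sub i1 i2, intervalIntegral.integral_sub
      (cp.intervalIntegrable _ _) intervalIntegrable_const, intervalIntegral.integral_const_mul,
      intervalIntegral.integral_sub (cmt.intervalIntegrable _ _) intervalIntegrable_const] at this
    have e1 : ∫ θ in (0:ℝ)..1, w (t + θ * h) 0 ^ p = -QQ q h t 0 := by
      rw [QQ, ← intervalIntegral.integral_neg]
      congr 1; funext θ; rw [H.bc]
    rw [e1] at this
    simpa [QQ] using this
  have est3 : |-QQ q h t 0 - QQ w h t 0 ^ p| ≤ 8 * e * L * η := by
    rw [abs_le] at est1 est2 ⊢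
    constructor <;> linarith [est1.1, est1.2, est2.1, est2.2]
  have estV : |VV w h t 0| ≤ 4 * L * η / h := by
    unfold VV
    rw [abs_div, abs_of_pos hh0]
    have := near 1 ⟨by norm_num, le_rfl⟩
    rw [one_mul] at this
    gcongr
  calc _ ≤ |(-QQ q h t 0 - QQ w h t 0 ^ p) * VV w h t 0| := le_abs_self _
    _ = |-QQ q h t 0 - QQ w h t 0 ^ p| * |VV w h t 0| := abs_mul _ _
    _ ≤ (8 * e * L * η) * (4 * L * η / h) := by gcongr
    _ = ε := by
      rw [he, ← hη2]; field_simp; ring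

lemma EE_cont_h (hp : 1 < p) (H : Wk p α β S w q) (t : ℝ) : Continuous fun h => EE p S w q h t := by
  unfold EE
  refine (continuous_const.mul ?_).sub (Continuous.div_const ?_ _)
  · apply intervalIntegral.continuous_parametric_intervalIntegral_of_continuous'
    exact (QQ_comp H.qc continuous_fst continuous_const continuous_snd).pow 2
  · exact (QQ_comp H.wc continuous_id continuous_const continuous_const).rpow_const
      (fun _ => Or.inr (by linarith))

lemma core (hp : 1 < p) (H : Wk p α β S w q) {a b C : ℝ} (hC : 0 < C) (ha : α < a) (hab : a ≤ b)
    (hb : b < β) {N : ℝ → ℝ → ℝ} (hN : Continuous (fun z : ℝ × ℝ => N z.1 z.2))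
    (hND : ∀ h > 0, ∀ t ∈ Icc a b, t + h < β →
      N h t ^ 2 ≤ C * ∫ x in (0:ℝ)..(S t), VV w h t x ^ 2) :
    ∫ t in a..b, N 0 t ^ 2 ≤ C * (EE p S w q 0 a - EE p S w q 0 b) := by
  have main : ∀ ε > 0, EE p S w q 0 b + ∫ t in a..b, (N 0 t ^ 2 / C - ε) ≤ EE p S w q 0 a := by
    intro ε hε
    obtain ⟨h₁, h₁p, H1⟩ := R1_small H (half_pos hε) ha hb
    obtain ⟨h₂, h₂p, H2⟩ := R2_small hp H (half_pos hε) ha hb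
    have cN : ∀ h, Continuous fun t => N h t ^ 2 / C - ε := fun h =>
      (((two_comp hN continuous_const continuous_id).pow 2).div_const C).sub continuous_const
    have step : ∀ h ∈ Ioo 0 (min (min h₁ h₂) (β - b)),
        EE p S w q h b + ∫ t in a..b, (N h t ^ 2 / C - ε) ≤ EE p S w q h a := by
      intro h hh
      have hh0 := hh.1
      have l1 : h < h₁ := lt_of_lt_of_le hh.2 ((min_le_left _ _).trans (min_le_left _ _))
      have l2 : h < h₂ := lt_of_lt_of_le hh.2 ((min_le_left _ _).trans (min_le_right _ _))
      have l3 : h < β - b := lt_of_lt_of_le hh.2 (min_le_right _ _)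
      have der : ∀ t ∈ Icc a b, HasDerivAt
          (fun t => EE p S w q h t + ∫ τ in a..t, (N h τ ^ 2 / C - ε)) _ t := fun t ht =>
        (EE_deriv hp H hh0 (by linarith [ht.1]) (by linarith [ht.2])).add
          ((cN h).integral_hasStrictDerivAt a t).hasDerivAt
      have anti := antitoneOn_of_deriv_nonpos (convex_Icc a b)
        (f := fun t => EE p S w q h t + ∫ τ in a..t, (N h τ ^ 2 / C - ε))
        (fun t ht => (der t ht).continuousAt.continuousWithinAt)
        (fun t ht => (der t (interior_subset ht)).differentiableAt.differentiableWithinAt)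
        (fun t ht => by
          have ht := interior_subset ht
          rw [(der t ht).deriv]
          have a1 := H1 h ⟨hh0, l1⟩ t ht
          have a2 := H2 h ⟨hh0, l2⟩ t ht
          have a3 : N h t ^ 2 / C ≤ ∫ x in (0:ℝ)..(S t), VV w h t x ^ 2 := by
            rw [div_le_iff₀' hC]
            exact hND h hh0 t ht (by linarith [ht.2])
          linarith)
      have := anti (left_mem_Icc.2 hab) (right_mem_Icc.2 hab) hab
      simpa using this
    have c1 : Continuous fun h => EE p S w q h b + ∫ t in a..b, (N h t ^ 2 / C - ε) := by
      refine (EE_cont_h hp H b).add ?_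
      apply intervalIntegral.continuous_parametric_intervalIntegral_of_continuous'
      exact ((hN.pow 2).div_const C).sub continuous_const
    refine le_of_tendsto_of_tendsto (b := 𝓝[>] (0:ℝ)) (c1.tendsto 0 |>.mono_left nhdsWithin_le_nhds)
      ((EE_cont_h hp H a).tendsto 0 |>.mono_left nhdsWithin_le_nhds) ?_
    filter_upwards [Ioo_mem_nhdsGT (lt_min (lt_min h₁p h₂p) (by linarith : 0 < β - b))] with h hh
    exact step h hh
  have c0 : Continuous fun t => N 0 t ^ 2 := (two_comp hN continuous_const continuous_id).pow 2
  have fin : (∫ t in a..b, N 0 t ^ 2) / C ≤ EE p S w q 0 a - EE p S w q 0 b := by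
    refine le_of_forall_pos_le_add fun ε hε => ?_
    have hba : 0 < b - a + 1 := by linarith
    have := main (ε / (b - a + 1)) (by positivity)
    rw [intervalIntegral.integral_sub ((c0.div_const C).intervalIntegrable _ _)
      intervalIntegrable_const, intervalIntegral.integral_div, intervalIntegral.integral_const,
      smul_eq_mul] at this
    have h2 : (b - a) * (ε / (b - a + 1)) ≤ ε := by
      rw [mul_div_assoc', div_le_iff₀ hba]; nlinarith
    linarith
  rwa [div_le_iff₀' hC] at fin

lemma QV (H : Wk p α β S w q) {h t : ℝ} (hh : 0 < h) (ht : α ≤ t) (hth : t + h ≤ β)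
    {x : ℝ} (hx : x ∈ Icc 0 (S t)) :
    (QQ q h t x - QQ q h t 0) ^ 2 ≤ x * ∫ x in (0:ℝ)..(S t), VV w h t x ^ 2 := by
  rw [← VV_int H hh ht hth hx]
  have vx := VV_cont H h t
  have h1 := aux_cs vx hx.1
  rw [sub_zero] at h1
  refine h1.trans (mul_le_mul_of_nonneg_left ?_ hx.1)
  apply intervalIntegral.integral_mono_interval le_rfl hx.1 hx.2
  · exact Eventually.of_forall fun x => sq_nonneg _
  · exact (vx.pow 2).intervalIntegrable _ _

lemma wk_C2 (hp : 1 < p) (H : Wk p α β S w q) {a b : ℝ} (ha : α < a) (hab : a ≤ b)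
    (hb : b < β) {x : ℝ} (hx : 0 < x) (hxS : x ≤ S α) :
    ∫ t in a..b, (q t x - q t 0) ^ 2 ≤ x * (EE p S w q 0 a - EE p S w q 0 b) := by
  have := core hp H hx ha hab hb (N := fun h t => QQ q h t x - QQ q h t 0)
    ((QQ_comp H.qc continuous_fst continuous_snd continuous_const).sub
      (QQ_comp H.qc continuous_fst continuous_snd continuous_const))
    (fun h hh t ht hth => QV H hh (by linarith [ht.1]) hth.le
      ⟨hx.le, hxS.trans (H.Smono (by linarith [ht.1]))⟩)
  simpa only [QQ_zero] using this

lemma wk_C1 (hp : 1 < p) (H : Wk p α β S w q) {a b : ℝ} (ha : α < a) (hab : a ≤ b)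
    (hb : b < β) {x : ℝ} (hx : 0 < x) (hxS : x ≤ S α) :
    ∫ t in a..b, (x * w t 0 ^ p + w t x - w t 0) ^ 2 ≤
      x ^ 3 * (EE p S w q 0 a - EE p S w q 0 b) := by
  have := core hp H (C := x ^ 3) (by positivity) ha hab hb
    (N := fun h t => ∫ y in (0:ℝ)..x, (QQ q h t y - QQ q h t 0))
    (by
      apply intervalIntegral.continuous_parametric_intervalIntegral_of_continuous'
      exact ((QQ_comp H.qc (by fun_prop) (by fun_prop) (by fun_prop)).sub
        (QQ_comp H.qc (by fun_prop) (by fun_prop) (by fun_prop))))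
    (fun h hh t ht hth => by
      have hc : Continuous fun y => QQ q h t y - QQ q h t 0 :=
        (QQ_comp H.qc continuous_const continuous_const continuous_id).sub continuous_const
      have hS : S α ≤ S t := H.Smono (by linarith [ht.1])
      set D := ∫ x in (0:ℝ)..(S t), VV w h t x ^ 2 with hD
      have D0 : 0 ≤ D := intervalIntegral.integral_nonneg (H.Spos t).le (fun x _ => sq_nonneg _)
      have h1 := aux_cs hc hx.le
      have h2 : ∫ y in (0:ℝ)..x, (QQ q h t y - QQ q h t 0) ^ 2 ≤ ∫ y in (0:ℝ)..x, x * D := by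
        apply intervalIntegral.integral_mono_on hx.le ((hc.pow 2).intervalIntegrable _ _)
          intervalIntegrable_const
        intro y hy
        refine (QV H hh (by linarith [ht.1]) hth.le ⟨hy.1, by linarith [hy.2]⟩).trans ?_
        exact mul_le_mul_of_nonneg_right hy.2 D0
      rw [intervalIntegral.integral_const, smul_eq_mul, sub_zero] at h2
      rw [sub_zero] at h1
      refine h1.trans ((mul_le_mul_of_nonneg_left h2 hx.le).trans (le_of_eq ?_))
      ring)
  refine le_trans (le_of_eq ?_) this
  apply intervalIntegral.integral_congr
  intro t ht
  rw [uIcc_of_le hab] at ht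
  have cq : Continuous (q t) := two_comp H.qc continuous_const continuous_id
  have hS : S α ≤ S t := H.Smono (by linarith [ht.1])
  simp only [QQ_zero]
  rw [intervalIntegral.integral_sub (cq.intervalIntegrable _ _) intervalIntegrable_const,
    H.H1 t 0 ⟨le_rfl, (H.Spos _).le⟩ x ⟨hx.le, by linarith⟩, intervalIntegral.integral_const,
    ← H.bc]
  simp only [smul_eq_mul]
  ring


end partC

section partD


section solfacts
variable {p s₀ T : ℝ} {φ s : ℝ → ℝ} {u : ℝ → ℝ → ℝ}

lemma sol_ux_slice (H : IsSolOn p s₀ φ T s u) {t : ℝ} (ht : t ∈ Ioc 0 T) :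
    ContinuousOn (deriv (u t)) (Icc 0 (s t)) :=
  H.ux_cont.comp (f := fun x : ℝ => ((t, x) : ℝ × ℝ)) (by fun_prop) (fun x hx => ⟨ht, hx⟩)

lemma sol_u_slice (H : IsSolOn p s₀ φ T s u) {t : ℝ} (ht : t ∈ Icc 0 T) :
    ContinuousOn (u t) (Icc 0 (s t)) :=
  H.u_cont.comp (f := fun x : ℝ => ((t, x) : ℝ × ℝ)) (by fun_prop) (fun x hx => ⟨ht, hx⟩)

lemma sol_ux_le (H : IsSolOn p s₀ φ T s u) {t : ℝ} (ht : t ∈ Ioc 0 T) :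
    deriv (u t) (s t) ≤ 0 := by
  by_contra! hc
  have hs := H.s_pos t ⟨ht.1.le, ht.2⟩
  have c := (sol_ux_slice H ht) (s t) ⟨hs.le, le_rfl⟩
  have ev := c.eventually (lt_mem_nhds hc)
  rw [nhdsWithin_Icc_eq_nhdsLE hs] at ev
  obtain ⟨l, hl, hl2⟩ := (mem_nhdsLE_iff_exists_Ioc_subset' hs).1 ev
  have hl3 : l < s t := hl
  set x0 := max 0 ((l + s t) / 2) with hx0
  have a1 : x0 < s t := by apply max_lt hs; linarith
  have a2 : l < x0 := lt_of_lt_of_le (by linarith) (le_max_right _ _)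
  have a3 : 0 ≤ x0 := le_max_left _ _
  obtain ⟨c, hc1, hc2⟩ := exists_deriv_eq_slope (u t) a1
    ((sol_u_slice H ⟨ht.1.le, ht.2⟩).mono (Icc_subset_Icc a3 le_rfl))
    (fun x hx => (H.ux_diff t ht x ⟨a3.trans_lt hx.1, hx.2⟩).differentiableWithinAt)
  have b1 : 0 < deriv (u t) c := hl2 ⟨a2.trans hc1.1, hc1.2.le⟩
  rw [hc2, H.bc_free t ht] at b1
  have b2 := H.u_nonneg t ⟨ht.1.le, ht.2⟩ x0 ⟨a3, a1.le⟩
  have : (0 - u t x0) / (s t - x0) ≤ 0 := div_nonpos_of_nonpos_of_nonneg (by linarith) (by linarith)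
  linarith

lemma sol_mono (H : IsSolOn p s₀ φ T s u) : MonotoneOn s (Icc 0 T) := by
  apply monotoneOn_of_deriv_nonneg (convex_Icc 0 T) H.s_cont
  · rw [interior_Icc]
    exact fun t ht => (H.s_diff t ⟨ht.1, ht.2.le⟩).differentiableWithinAt
  · rw [interior_Icc]
    intro t ht
    have ht' : t ∈ Ioc 0 T := ⟨ht.1, ht.2.le⟩
    rw [H.stefan t ht']
    linarith [sol_ux_le H ht']

lemma sol_ftc (H : IsSolOn p s₀ φ T s u) {t : ℝ} (ht : t ∈ Ioc 0 T) {x y : ℝ}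
    (hx : 0 ≤ x) (hxy : x ≤ y) (hy : y ≤ s t) :
    ∫ ξ in x..y, deriv (u t) ξ = u t y - u t x := by
  have sub : Icc x y ⊆ Icc 0 (s t) := Icc_subset_Icc hx hy
  apply intervalIntegral.integral_eq_sub_of_hasDerivAt_of_le hxy
    ((sol_u_slice H ⟨ht.1.le, ht.2⟩).mono sub)
  · intro z hz
    exact (H.ux_diff t ht z ⟨hx.trans_lt hz.1, hz.2.trans_le hy⟩).hasDerivAt
  · apply ContinuousOn.intervalIntegrable
    rw [uIcc_of_le hxy]
    exact (sol_ux_slice H ht).mono sub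

lemma sol_HI0 (H : IsSolOn p s₀ φ T s u) {t₁ t₂ : ℝ} (h1 : 0 < t₁) (h12 : t₁ ≤ t₂) (h2 : t₂ ≤ T)
    {x y : ℝ} (hx : 0 < x) (hxy : x ≤ y) (hy : y < s t₁) :
    ∫ ξ in x..y, (u t₂ ξ - u t₁ ξ) = ∫ τ in t₁..t₂, (deriv (u τ) y - deriv (u τ) x) := by
  have tm : ∀ τ ∈ Icc t₁ t₂, τ ∈ Ioc 0 T := fun τ hτ => ⟨h1.trans_le hτ.1, hτ.2.trans h2⟩
  have sm : ∀ τ ∈ Icc t₁ t₂, s t₁ ≤ s τ := fun τ hτ =>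
    sol_mono H ⟨h1.le, h12.trans h2⟩ ⟨(tm τ hτ).1.le, (tm τ hτ).2⟩ hτ.1
  have zm : ∀ τ ∈ Icc t₁ t₂, ∀ z ∈ Icc x y, z ∈ Ioo 0 (s τ) := fun τ hτ z hz =>
    ⟨hx.trans_le hz.1, hz.2.trans_lt (hy.trans_le (sm τ hτ))⟩
  have step1 : ∫ ξ in x..y, (u t₂ ξ - u t₁ ξ) =
      ∫ ξ in x..y, ∫ τ in t₁..t₂, deriv (deriv (u τ)) ξ := by
    apply intervalIntegral.integral_congr
    intro z hz
    rw [uIcc_of_le hxy] at hz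
    simp only
    rw [eq_comm]
    have := intervalIntegral.integral_eq_sub_of_hasDerivAt (a := t₁) (b := t₂)
      (f := fun τ => u τ z) (f' := fun τ => deriv (deriv (u τ)) z) (by
        intro τ hτ
        rw [uIcc_of_le h12] at hτ
        have := (H.ut_diff τ (tm τ hτ) z (zm τ hτ z hz)).hasDerivAt
        rwa [H.heat τ (tm τ hτ) z (zm τ hτ z hz)] at this) (by
        apply ContinuousOn.intervalIntegrable
        rw [uIcc_of_le h12]
        exact H.uxx_cont.comp (f := fun τ : ℝ => ((τ, z) : ℝ × ℝ)) (by fun_prop)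
          (fun τ hτ => ⟨tm τ hτ, zm τ hτ z hz⟩))
    exact this
  rw [step1, MeasureTheory.intervalIntegral_intervalIntegral_swap]
  · apply intervalIntegral.integral_congr
    intro τ hτ
    rw [uIcc_of_le h12] at hτ
    apply intervalIntegral.integral_eq_sub_of_hasDerivAt
    · intro z hz
      rw [uIcc_of_le hxy] at hz
      exact (H.uxx_diff τ (tm τ hτ) z (zm τ hτ z hz)).hasDerivAt
    · apply ContinuousOn.intervalIntegrable
      rw [uIcc_of_le hxy]
      exact H.uxx_cont.comp (f := fun z : ℝ => ((τ, z) : ℝ × ℝ)) (by fun_prop)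
          (fun z hz => ⟨tm τ hτ, zm τ hτ z hz⟩)
  · rw [uIoc_of_le h12, uIoc_of_le hxy]
    have c : ContinuousOn (Function.uncurry fun ξ τ => deriv (deriv (u τ)) ξ)
        (Icc x y ×ˢ Icc t₁ t₂) :=
      H.uxx_cont.comp (f := fun z : ℝ × ℝ => ((z.2, z.1) : ℝ × ℝ)) (by fun_prop)
          (fun z hz => ⟨tm z.2 hz.2, zm z.2 hz.2 z.1 hz.1⟩)
    exact (c.integrableOn_compact (isCompact_Icc.prod isCompact_Icc)).mono_set
      (prod_mono Ioc_subset_Icc_self Ioc_subset_Icc_self)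

/-- clamp -/
def kp (α β t : ℝ) : ℝ := max α (min t β)

lemma kp_cont (α β : ℝ) : Continuous (kp α β) := by unfold kp; fun_prop
lemma kp_mono (α β : ℝ) : Monotone (kp α β) := fun a b h => by unfold kp; gcongr
lemma kp_mem {α β : ℝ} (h : α ≤ β) (t : ℝ) : kp α β t ∈ Icc α β :=
  ⟨le_max_left _ _, max_le h (min_le_right _ _)⟩
lemma kp_id {α β t : ℝ} (h : t ∈ Icc α β) : kp α β t = t := by
  unfold kp; rw [min_eq_left h.2, max_eq_right h.1]

lemma sol_wk (H : IsSolOn p s₀ φ T s u) {α : ℝ} (hα : 0 < α) (hαT : α < T) :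
    Wk p α T (fun t => s (kp α T t)) (fun t x => u (kp α T t) (kp 0 (s (kp α T t)) x))
      (fun t x => deriv (u (kp α T t)) (kp 0 (s (kp α T t)) x)) := by
  have km : ∀ t, kp α T t ∈ Ioc 0 T := fun t =>
    ⟨hα.trans_le (kp_mem hαT.le t).1, (kp_mem hαT.le t).2⟩
  have km' : ∀ t, kp α T t ∈ Icc 0 T := fun t => ⟨(km t).1.le, (km t).2⟩
  have sp : ∀ t, 0 < s (kp α T t) := fun t => H.s_pos _ (km' t)
  have sc : Continuous fun t => s (kp α T t) := H.s_cont.comp_continuous (kp_cont _ _) km'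
  have mapc : Continuous fun z : ℝ × ℝ => ((kp α T z.1, kp 0 (s (kp α T z.1)) z.2) : ℝ × ℝ) := by
    apply Continuous.prodMk
    · exact (kp_cont _ _).comp continuous_fst
    · have := sc.comp (continuous_fst (X := ℝ) (Y := ℝ))
      exact continuous_const.max (continuous_snd.min this)
  have wc : Continuous (fun z : ℝ × ℝ => u (kp α T z.1) (kp 0 (s (kp α T z.1)) z.2)) :=
    H.u_cont.comp_continuous mapc (fun z => ⟨km' _, kp_mem (sp _).le _⟩)
  have qc : Continuous (fun z : ℝ × ℝ => deriv (u (kp α T z.1)) (kp 0 (s (kp α T z.1)) z.2)) :=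
    H.ux_cont.comp_continuous mapc (fun z => ⟨km _, kp_mem (sp _).le _⟩)
  have s_end : ∀ t, kp 0 (s (kp α T t)) (s (kp α T t)) = s (kp α T t) := fun t =>
    kp_id ⟨(sp t).le, le_rfl⟩
  have s_zero : ∀ t, kp 0 (s (kp α T t)) 0 = 0 := fun t => kp_id ⟨le_rfl, (sp t).le⟩
  refine ⟨hαT, sc, sp, ?_, ?_, ?_, wc, qc, ?_, ?_, ?_, ?_, ?_⟩
  · intro a b hab
    exact sol_mono H (km' a) (km' b) (kp_mono _ _ hab)
  · intro t ht
    have e : kp α T t = t := kp_id ⟨ht.1.le, ht.2.le⟩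
    have ht' : t ∈ Ioc 0 T := ⟨hα.trans ht.1, ht.2.le⟩
    rw [s_end, e, ← H.stefan t ht']
    apply (H.s_diff t ht').hasDerivAt.congr_of_eventuallyEq
    filter_upwards [Icc_mem_nhds ht.1 ht.2] with τ hτ
    rw [kp_id hτ]
  · intro t
    rw [s_end]
    linarith [sol_ux_le H (km t)]
  · have le : ∀ t, ∀ x ∈ Icc 0 (s (kp α T t)), ∀ y ∈ Icc 0 (s (kp α T t)), x ≤ y →
        ∫ ξ in x..y, deriv (u (kp α T t)) (kp 0 (s (kp α T t)) ξ) =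
        u (kp α T t) (kp 0 (s (kp α T t)) y) - u (kp α T t) (kp 0 (s (kp α T t)) x) := by
      intro t x hx y hy hxy
      rw [kp_id hx, kp_id hy, ← sol_ftc H (km t) hx.1 hxy hy.2]
      apply intervalIntegral.integral_congr
      intro z hz
      rw [uIcc_of_le hxy] at hz
      simp only
      rw [kp_id ⟨hx.1.trans hz.1, hz.2.trans hy.2⟩]
    intro t x hx y hy
    rcases le_total x y with h | h
    · exact le t x hx y hy h
    · rw [intervalIntegral.integral_symm, le t y hy x hx h]; ring
  · intro t₁ ht₁ t₂ ht₂ h12 x hx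
    have e1 : kp α T t₁ = t₁ := kp_id ht₁
    have e2 : kp α T t₂ = t₂ := kp_id ht₂
    have sp1 : 0 < s t₁ := by simpa [e1] using sp t₁
    simp only [e1] at hx
    have s12 : s t₁ ≤ s t₂ := sol_mono H ⟨by linarith [ht₁.1], ht₁.2⟩ ⟨by linarith [ht₂.1], ht₂.2⟩ h12
    set w : ℝ → ℝ → ℝ := fun t x => u (kp α T t) (kp 0 (s (kp α T t)) x) with hw
    set q : ℝ → ℝ → ℝ := fun t x => deriv (u (kp α T t)) (kp 0 (s (kp α T t)) x) with hq
    have key : ∀ x y, 0 < x → x ≤ y → y < s t₁ →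
        ∫ ξ in x..y, (w t₂ ξ - w t₁ ξ) = ∫ τ in t₁..t₂, (q τ y - q τ x) := by
      intro x y hx hxy hy
      have := sol_HI0 H (hα.trans_le ht₁.1) h12 ht₂.2 hx hxy hy
      convert this using 1
      · apply intervalIntegral.integral_congr
        intro z hz
        rw [uIcc_of_le hxy] at hz
        simp only [hw, e1, e2]
        rw [kp_id ⟨hx.le.trans hz.1, (hz.2.trans hy.le).trans s12⟩, kp_id ⟨hx.le.trans hz.1, (hz.2.trans hy.le)⟩]
      · apply intervalIntegral.integral_congr
        intro τ hτ
        rw [uIcc_of_le h12] at hτ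
        have eτ : kp α T τ = τ := kp_id ⟨ht₁.1.trans hτ.1, hτ.2.trans ht₂.2⟩
        have s1τ : s t₁ ≤ s τ := sol_mono H ⟨by linarith [ht₁.1], ht₁.2⟩
          ⟨by linarith [ht₁.1, hτ.1], by linarith [hτ.2, ht₂.2]⟩ hτ.1
        simp only [hq, eτ]
        rw [kp_id ⟨hx.le.trans hxy, hy.le.trans s1τ⟩, kp_id ⟨hx.le, (hxy.trans hy.le).trans s1τ⟩]
    have c1 : ∀ t, Continuous fun ξ => w t ξ := fun t => two_comp wc continuous_const continuous_id
    have gl : Continuous fun ε : ℝ => ∫ ξ in (ε * (s t₁ / 2))..((1 - ε) * x + ε * (s t₁ / 2)), (w t₂ ξ - w t₁ ξ) := by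
      have c : Continuous fun ξ => w t₂ ξ - w t₁ ξ := (c1 t₂).sub (c1 t₁)
      have pr : Continuous fun b => ∫ ξ in (0:ℝ)..b, (w t₂ ξ - w t₁ ξ) :=
        intervalIntegral.continuous_primitive (fun a b => c.intervalIntegrable a b) 0
      have e : (fun ε : ℝ => ∫ ξ in (ε * (s t₁ / 2))..((1 - ε) * x + ε * (s t₁ / 2)), (w t₂ ξ - w t₁ ξ))
        = fun ε : ℝ => (∫ ξ in (0:ℝ)..((1 - ε) * x + ε * (s t₁ / 2)), (w t₂ ξ - w t₁ ξ)) -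
          ∫ ξ in (0:ℝ)..(ε * (s t₁ / 2)), (w t₂ ξ - w t₁ ξ) := by
        funext ε
        rw [intervalIntegral.integral_interval_sub_left] <;> exact c.intervalIntegrable _ _
      rw [e]
      exact (pr.comp (by fun_prop)).sub (pr.comp (by fun_prop))
    have gr : Continuous fun ε : ℝ => ∫ τ in t₁..t₂, (q τ ((1 - ε) * x + ε * (s t₁ / 2)) - q τ (ε * (s t₁ / 2))) := by
      apply intervalIntegral.continuous_parametric_intervalIntegral_of_continuous'
      have qc' : Continuous (fun z : ℝ × ℝ => q z.1 z.2) := qc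
      have f1 : Continuous (fun z : ℝ × ℝ => q z.2 ((1 - z.1) * x + z.1 * (s t₁ / 2))) :=
        two_comp qc' (by fun_prop) (by fun_prop)
      have f2 : Continuous (fun z : ℝ × ℝ => q z.2 (z.1 * (s t₁ / 2))) :=
        two_comp qc' (by fun_prop) (by fun_prop)
      exact f1.sub f2
    have cl := isClosed_eq gl gr
    have sub : Ioo (0:ℝ) 1 ⊆ {ε | ∫ ξ in (ε * (s t₁ / 2))..((1 - ε) * x + ε * (s t₁ / 2)), (w t₂ ξ - w t₁ ξ)
      = ∫ τ in t₁..t₂, (q τ ((1 - ε) * x + ε * (s t₁ / 2)) - q τ (ε * (s t₁ / 2)))} := by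
      intro ε hε
      apply key
      · have := hε.1; positivity
      · have := mul_nonneg (sub_nonneg.2 hε.2.le) hx.1; linarith
      · nlinarith [hε.1, hε.2, hx.2, mul_le_mul_of_nonneg_left hx.2 (sub_nonneg.2 hε.2.le), mul_pos hε.1 sp1]
    have := cl.closure_subset_iff.2 sub
    rw [closure_Ioo (by norm_num)] at this
    have := this (left_mem_Icc.2 zero_le_one)
    simpa using this
  · intro t
    rw [s_zero]
    exact H.bc_zero _ (km t)
  · intro t
    rw [s_end]
    exact H.bc_free _ (km t)
  · intro t x
    exact H.u_nonneg _ (km' t) _ (kp_mem (sp t).le x)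

end solfacts

end partD

section partE


/-- Abstract consequences of the energy identity. -/
structure AbS (p s₀ T : ℝ) (m F : ℝ → ℝ) (A : ℝ → ℝ → ℝ) : Prop where
  mc : ContinuousOn m (Ioo 0 T)
  mn : ∀ t ∈ Ioo 0 T, 0 ≤ m t
  Fm : ∀ a b, 0 < a → a ≤ b → b < T → F a ≤ F b
  C1 : ∀ a b μ x, 0 < a → a ≤ b → b < T → 0 < μ → 0 < x → x ≤ s₀ → x * μ ^ (p - 1) = 2 →
    (∀ t ∈ Icc a b, μ ≤ m t) → (b - a) * μ ^ 2 ≤ x ^ 3 * (F b - F a)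
  C2 : ∀ a b η, 0 < a → a ≤ b → b < T → 0 < η → η ≤ s₀ →
    (A b η - A a η) ^ 2 ≤ η * (b - a) * (F b - F a)
  C3 : ∀ t η, 0 < t → t < T → 0 < η → η ≤ s₀ →
    (A t η - η * m t) ^ 2 ≤ η ^ 3 * (2 * (m t ^ (p + 1) / (p + 1) - F t))
  C4 : ∀ t, 0 < t → t < T → (p + 1) * F t ≤ m t ^ (p + 1)

section solfacts2
variable {p s₀ T : ℝ} {φ s : ℝ → ℝ} {u : ℝ → ℝ → ℝ}

lemma EE_energy (H : IsSolOn p s₀ φ T s u) {α t : ℝ} (hα : 0 < α) (ht : t ∈ Icc α T) :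
    EE p (fun t => s (kp α T t)) (fun t x => u (kp α T t) (kp 0 (s (kp α T t)) x))
      (fun t x => deriv (u (kp α T t)) (kp 0 (s (kp α T t)) x)) 0 t = energy p s u t := by
  have sp : 0 < s t := H.s_pos t ⟨hα.le.trans ht.1, ht.2⟩
  unfold EE energy
  simp only [QQ_zero, kp_id ht]
  rw [kp_id (t := 0) ⟨le_rfl, sp.le⟩]
  congr 2
  apply intervalIntegral.integral_congr
  intro z hz
  rw [uIcc_of_le sp.le] at hz
  simp only [kp_id hz]

lemma sol_s0 (H : IsSolOn p s₀ φ T s u) {t : ℝ} (h0 : 0 ≤ t) (ht : t ≤ T) : s₀ ≤ s t := by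
  rw [← H.init_s]
  exact sol_mono H ⟨le_rfl, H.T_pos.le⟩ ⟨h0, ht⟩ h0

lemma sol_C2 (hp : 1 < p) (H : IsSolOn p s₀ φ T s u) {a b x : ℝ} (ha : 0 < a) (hab : a ≤ b)
    (hb : b < T) (hx : 0 < x) (hxs : x ≤ s₀) :
    ∫ t in a..b, (deriv (u t) x - deriv (u t) 0) ^ 2 ≤ x * (energy p s u a - energy p s u b) := by
  have W := sol_wk H (α := a / 2) (by linarith) (by linarith)
  have h := wk_C2 hp W (a := a) (b := b) (x := x) (by linarith) hab hb hx (by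
    rw [kp_id ⟨le_rfl, by linarith⟩]
    exact hxs.trans (sol_s0 H (by linarith) (by linarith)))
  rw [EE_energy H (by linarith) ⟨by linarith, by linarith⟩,
    EE_energy H (by linarith) ⟨by linarith, by linarith⟩] at h
  refine le_trans (le_of_eq ?_) h
  apply intervalIntegral.integral_congr
  intro t ht
  rw [uIcc_of_le hab] at ht
  have e : kp (a / 2) T t = t := kp_id ⟨by linarith [ht.1], by linarith [ht.2]⟩
  have := sol_s0 H (t := t) (by linarith [ht.1]) (by linarith [ht.2])
  simp only [e]
  rw [kp_id ⟨hx.le, by linarith⟩, kp_id ⟨le_rfl, by linarith⟩]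

lemma sol_C1 (hp : 1 < p) (H : IsSolOn p s₀ φ T s u) {a b x : ℝ} (ha : 0 < a) (hab : a ≤ b)
    (hb : b < T) (hx : 0 < x) (hxs : x ≤ s₀) :
    ∫ t in a..b, (x * u t 0 ^ p + u t x - u t 0) ^ 2 ≤
      x ^ 3 * (energy p s u a - energy p s u b) := by
  have W := sol_wk H (α := a / 2) (by linarith) (by linarith)
  have h := wk_C1 hp W (a := a) (b := b) (x := x) (by linarith) hab hb hx (by
    rw [kp_id ⟨le_rfl, by linarith⟩]
    exact hxs.trans (sol_s0 H (by linarith) (by linarith)))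
  rw [EE_energy H (by linarith) ⟨by linarith, by linarith⟩,
    EE_energy H (by linarith) ⟨by linarith, by linarith⟩] at h
  refine le_trans (le_of_eq ?_) h
  apply intervalIntegral.integral_congr
  intro t ht
  rw [uIcc_of_le hab] at ht
  have e : kp (a / 2) T t = t := kp_id ⟨by linarith [ht.1], by linarith [ht.2]⟩
  have := sol_s0 H (t := t) (by linarith [ht.1]) (by linarith [ht.2])
  simp only [e]
  rw [kp_id ⟨hx.le, by linarith⟩, kp_id ⟨le_rfl, by linarith⟩]

lemma sol_I (H : IsSolOn p s₀ φ T s u) {a b x : ℝ} (ha : 0 < a) (hab : a ≤ b)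
    (hb : b < T) (hx : 0 < x) (hxs : x ≤ s₀) :
    ∫ y in (0:ℝ)..x, (u b y - u a y) = ∫ t in a..b, (deriv (u t) x - deriv (u t) 0) := by
  have W := sol_wk H (α := a / 2) (by linarith) (by linarith)
  have sa := sol_s0 H (t := a) (by linarith) (by linarith)
  have sb := sol_s0 H (t := b) (by linarith) (by linarith)
  have ea : kp (a / 2) T a = a := kp_id ⟨by linarith, by linarith⟩
  have eb : kp (a / 2) T b = b := kp_id ⟨by linarith, by linarith⟩
  have h := W.HI a ⟨by linarith, by linarith⟩ b ⟨by linarith, by linarith⟩ hab x ⟨hx.le, by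
    simp only [ea]; linarith⟩
  convert h using 1
  · apply intervalIntegral.integral_congr
    intro t ht
    rw [uIcc_of_le hx.le] at ht
    simp only [ea, eb]
    rw [kp_id ⟨ht.1, by linarith [ht.2]⟩, kp_id ⟨ht.1, by linarith [ht.2]⟩]
  · apply intervalIntegral.integral_congr
    intro t ht
    rw [uIcc_of_le hab] at ht
    have e : kp (a / 2) T t = t := kp_id ⟨by linarith [ht.1], by linarith [ht.2]⟩
    have := sol_s0 H (t := t) (by linarith [ht.1]) (by linarith [ht.2])
    simp only [e]
    rw [kp_id ⟨hx.le, by linarith⟩, kp_id ⟨le_rfl, by linarith⟩]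

lemma sol_xc (H : IsSolOn p s₀ φ T s u) {x : ℝ} (h0 : 0 ≤ x) (hx : x ≤ s₀) :
    ContinuousOn (fun t => u t x) (Icc 0 T) :=
  H.u_cont.comp (f := fun t : ℝ => ((t, x) : ℝ × ℝ)) (by fun_prop)
    (fun t ht => ⟨ht, h0, hx.trans (sol_s0 H ht.1 ht.2)⟩)

lemma sol_uxc (H : IsSolOn p s₀ φ T s u) {x : ℝ} (h0 : 0 ≤ x) (hx : x ≤ s₀) :
    ContinuousOn (fun t => deriv (u t) x) (Ioc 0 T) :=
  H.ux_cont.comp (f := fun t : ℝ => ((t, x) : ℝ × ℝ)) (by fun_prop)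
    (fun t ht => ⟨ht, h0, hx.trans (sol_s0 H ht.1.le ht.2)⟩)

lemma sol_C3 (H : IsSolOn p s₀ φ T s u) {t η : ℝ} (ht : 0 < t) (htT : t ≤ T)
    (hη : 0 < η) (hηs : η ≤ s₀) :
    ((∫ y in (0:ℝ)..η, u t y) - η * u t 0) ^ 2 ≤
      η ^ 3 * ∫ x in (0:ℝ)..(s t), (deriv (u t) x) ^ 2 := by
  have st := sol_s0 H ht.le htT
  set N := ∫ x in (0:ℝ)..(s t), (deriv (u t) x) ^ 2 with hN
  have cu := sol_u_slice H ⟨ht.le, htT⟩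
  have cq := sol_ux_slice H ⟨ht, htT⟩
  have cu' : ContinuousOn (fun y => u t y - u t 0) (Icc 0 η) :=
    (cu.mono (Icc_subset_Icc le_rfl (by linarith))).sub continuousOn_const
  have e : (∫ y in (0:ℝ)..η, u t y) - η * u t 0 = ∫ y in (0:ℝ)..η, (u t y - u t 0) := by
    rw [intervalIntegral.integral_sub, intervalIntegral.integral_const]
    · simp
    · apply ContinuousOn.intervalIntegrable
      rw [uIcc_of_le hη.le]
      exact cu.mono (Icc_subset_Icc le_rfl (by linarith))
    · exact intervalIntegrable_const
  have b : ∀ y ∈ Icc 0 η, (u t y - u t 0) ^ 2 ≤ η * N := by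
    intro y hy
    rw [← sol_ftc H ⟨ht, htT⟩ le_rfl hy.1 (by linarith [hy.2])]
    have c1 := aux_cs' (cq.mono (Icc_subset_Icc le_rfl (by linarith [hy.2] : y ≤ s t))) hy.1
    have ii : IntervalIntegrable (fun x => deriv (u t) x ^ 2) volume 0 (s t) := by
      apply ContinuousOn.intervalIntegrable
      rw [uIcc_of_le (by linarith)]
      exact cq.pow 2
    have c2 : ∫ x in (0:ℝ)..y, (deriv (u t) x) ^ 2 ≤ N := by
      apply intervalIntegral.integral_mono_interval le_rfl hy.1 (by linarith [hy.2])
      · exact ae_of_all _ fun x => sq_nonneg _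
      · exact ii
    have c3 : 0 ≤ ∫ x in (0:ℝ)..y, (deriv (u t) x) ^ 2 :=
      intervalIntegral.integral_nonneg hy.1 (fun x _ => sq_nonneg _)
    calc _ ≤ _ := c1
      _ ≤ η * N := mul_le_mul (by linarith [hy.2]) c2 c3 hη.le
  rw [e]
  have c := aux_cs' cu' hη.le
  have c2 : ∫ y in (0:ℝ)..η, (u t y - u t 0) ^ 2 ≤ ∫ y in (0:ℝ)..η, η * N := by
    apply intervalIntegral.integral_mono_on hη.le
    · apply ContinuousOn.intervalIntegrable
      rw [uIcc_of_le hη.le]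
      exact cu'.pow 2
    · exact intervalIntegrable_const
    · exact b
  rw [intervalIntegral.integral_const] at c2
  simp only [sub_zero, smul_eq_mul] at c2 c
  calc _ ≤ _ := c
    _ ≤ η * (η * (η * N)) := by gcongr
    _ = _ := by ring

lemma sol_Ab (hp : 1 < p) (h0 : 0 < s₀) (H : ∀ T' : ℝ, 0 < T' → T' < T → IsSolOn p s₀ φ T' s u) :
    AbS p s₀ T (fun t => u t 0) (fun t => - energy p s u t) (fun t η => ∫ y in (0:ℝ)..η, u t y) := by
  have H' : ∀ b, 0 < b → b < T → ∃ T', b < T' ∧ IsSolOn p s₀ φ T' s u := fun b hb hbT =>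
    ⟨(b + T) / 2, by linarith, H _ (by linarith) (by linarith)⟩
  have mcl : ∀ a b, 0 < a → b < T → ∀ x ∈ Icc 0 s₀, ContinuousOn (fun t => u t x) (Icc a b) := by
    intro a b ha hb x hx
    rcases lt_or_ge b a with h | h
    · rw [Icc_eq_empty (by linarith)]; exact continuousOn_empty _
    exact (sol_xc (H b (by linarith) hb) hx.1 hx.2).mono (Icc_subset_Icc ha.le le_rfl)
  refine ⟨?_, ?_, ?_, ?_, ?_, ?_, ?_⟩
  · intro t ht
    have := mcl (t / 2) ((t + T) / 2) (by linarith [ht.1]) (by linarith [ht.2]) 0 ⟨le_rfl, h0.le⟩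
    exact (this.continuousAt (Icc_mem_nhds (by linarith [ht.1]) (by linarith [ht.2]))).continuousWithinAt
  · intro t ht
    have h := H t ht.1 ht.2
    exact h.u_nonneg t ⟨ht.1.le, le_rfl⟩ 0 ⟨le_rfl, (h.s_pos t ⟨ht.1.le, le_rfl⟩).le⟩
  · intro a b ha hab hb
    obtain ⟨T', hT', h⟩ := H' b (by linarith) hb
    have c := sol_C2 hp h ha hab hT' h0 le_rfl
    have : 0 ≤ ∫ t in a..b, (deriv (u t) s₀ - deriv (u t) 0) ^ 2 :=
      intervalIntegral.integral_nonneg hab (fun x _ => sq_nonneg _)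
    have := nonneg_of_mul_nonneg_right (this.trans c) h0
    linarith
  · intro a b μ x ha hab hb hμ hx hxs hxμ hm
    obtain ⟨T', hT', h⟩ := H' b (by linarith) hb
    have c := sol_C1 hp h ha hab hT' hx hxs
    have c2 : ∫ t in a..b, μ ^ 2 ≤ ∫ t in a..b, (x * u t 0 ^ p + u t x - u t 0) ^ 2 := by
      have i1 := mcl a b ha hb x ⟨hx.le, hxs⟩
      have i0 := mcl a b ha hb 0 ⟨le_rfl, h0.le⟩
      have ip : ContinuousOn (fun t => u t 0 ^ p) (Icc a b) :=
        i0.rpow_const (fun t _ => Or.inr (by linarith))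
      apply intervalIntegral.integral_mono_on hab
      · exact intervalIntegrable_const
      · apply ContinuousOn.intervalIntegrable
        rw [uIcc_of_le hab]
        exact (((continuousOn_const.mul ip).add i1).sub i0).pow 2
      · intro t ht
        have hmt : μ ≤ u t 0 := hm t ht
        have e : u t 0 ^ p = u t 0 ^ (p - 1) * u t 0 := by
          rw [← rpow_add_one (by linarith)]; ring_nf
        have g : μ ^ (p - 1) ≤ u t 0 ^ (p - 1) := rpow_le_rpow hμ.le hmt (by linarith)
        have un : 0 ≤ u t x := h.u_nonneg t ⟨by linarith [ht.1], by linarith [ht.2]⟩ x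
          ⟨hx.le, hxs.trans (sol_s0 h (by linarith [ht.1]) (by linarith [ht.2]))⟩
        have g2 : 2 ≤ x * u t 0 ^ (p - 1) := by rw [← hxμ]; gcongr
        have g3 : 2 * u t 0 ≤ x * u t 0 ^ p := by
          rw [e, ← mul_assoc]; exact mul_le_mul_of_nonneg_right g2 (by linarith)
        apply pow_le_pow_left₀ hμ.le
        linarith
    rw [intervalIntegral.integral_const, smul_eq_mul] at c2
    linarith
  · intro a b η ha hab hb hη hηs
    obtain ⟨T', hT', h⟩ := H' b (by linarith) hb
    have c := sol_C2 hp h ha hab hT' hη hηs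
    have e := sol_I h ha hab hT' hη hηs
    rw [intervalIntegral.integral_sub] at e
    · rw [e]
      have sub : Icc a b ⊆ Ioc 0 T' := fun t ht => ⟨by linarith [ht.1], by linarith [ht.2]⟩
      have cs := aux_cs' (((sol_uxc h hη.le hηs).mono sub).sub ((sol_uxc h le_rfl h0.le).mono sub)) hab
      calc _ ≤ _ := cs
        _ ≤ (b - a) * (η * (energy p s u a - energy p s u b)) :=
          mul_le_mul_of_nonneg_left c (by linarith)
        _ = _ := by ring
    all_goals
      apply ContinuousOn.intervalIntegrable
      rw [uIcc_of_le hη.le]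
      refine (sol_u_slice h ⟨by linarith, by linarith⟩).mono (Icc_subset_Icc le_rfl (hηs.trans (sol_s0 h (by linarith) (by linarith))))
  · intro t η ht htT hη hηs
    have h := H t ht htT
    have c := sol_C3 h ht le_rfl hη hηs
    convert c using 2
    unfold energy
    ring
  · intro t ht htT
    have h := H t ht htT
    have sp := h.s_pos t ⟨ht.le, le_rfl⟩
    have : 0 ≤ ∫ x in (0:ℝ)..(s t), (deriv (u t) x) ^ 2 :=
      intervalIntegral.integral_nonneg sp.le (fun x _ => sq_nonneg _)
    have e : -energy p s u t ≤ u t 0 ^ (p + 1) / (p + 1) := by unfold energy; linarith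
    rw [le_div_iff₀ (by linarith)] at e
    linarith

end solfacts2

end partE

section partG


lemma last_hit {m : ℝ → ℝ} {a t μ : ℝ} (hat : a ≤ t) (hc : ContinuousOn m (Icc a t))
    (h0 : m a ≤ μ) (h1' : μ ≤ m t) :
    ∃ t₁ ∈ Icc a t, m t₁ = μ ∧ ∀ τ ∈ Icc t₁ t, μ ≤ m τ := by
  have hK : IsCompact (Icc a t ∩ m ⁻¹' Iic μ) :=
    isCompact_Icc.of_isClosed_subset
      (hc.preimage_isClosed_of_isClosed isClosed_Icc isClosed_Iic) inter_subset_left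
  obtain ⟨t₁, ⟨h1, h2⟩, h3⟩ := hK.exists_isGreatest ⟨a, ⟨le_rfl, hat⟩, h0⟩
  have h2' : m t₁ ≤ μ := h2
  obtain ⟨τ, hτ, hτm⟩ := intermediate_value_Icc h1.2 (hc.mono (Icc_subset_Icc h1.1 le_rfl)) ⟨h2', h1'⟩
  have : τ ≤ t₁ := h3 ⟨⟨h1.1.trans hτ.1, hτ.2⟩, hτm.le⟩
  have e : τ = t₁ := le_antisymm this hτ.1
  subst e
  refine ⟨τ, h1, hτm, fun σ hσ => ?_⟩
  by_contra! hlt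
  have : σ ≤ τ := h3 ⟨⟨h1.1.trans hσ.1, hσ.2⟩, hlt.le⟩
  have : σ = τ := le_antisymm this hσ.1
  subst this
  linarith

lemma rate_abs {F : ℝ → ℝ} {t₀ T' r L κ : ℝ} (hr : 0 < r) (hL : 0 < L) (hκ : 1 < κ)
    (ht : t₀ ≤ T')
    (hpos : ∀ t ∈ Icc t₀ T', 0 < F t)
    (hm : ∀ t ∈ Icc t₀ T', F t ≤ F T')
    (hs : ∀ t ∈ Icc t₀ T', ∀ t' ∈ Icc t₀ T', t' = t + L * (F t ^ r)⁻¹ → κ * F t ≤ F t') :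
    (T' - t₀) * F t₀ ^ r ≤ L / (1 - (κ ^ r)⁻¹) := by
  set g := fun t => (T' - t) * F t ^ r with hg
  have bdd : BddAbove (g '' Icc t₀ T') := by
    refine ⟨(T' - t₀) * F T' ^ r, ?_⟩
    rintro _ ⟨t, h, rfl⟩
    simp only [hg]
    have h1 : F t ^ r ≤ F T' ^ r := rpow_le_rpow (hpos t h).le (hm t h) hr.le
    have h2 : 0 ≤ F t ^ r := (rpow_pos_of_pos (hpos t h) r).le
    have := h.1; have := h.2
    apply mul_le_mul <;> linarith
  set Θ := sSup (g '' Icc t₀ T') with hΘ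
  have le : ∀ t ∈ Icc t₀ T', g t ≤ Θ := fun t h => le_csSup bdd ⟨t, h, rfl⟩
  have kp' : 1 < κ ^ r := one_lt_rpow hκ hr
  have kinv : (κ ^ r)⁻¹ < 1 := inv_lt_one_of_one_lt₀ kp'
  have kinv0 : 0 < (κ ^ r)⁻¹ := by positivity
  have Θ0 : 0 ≤ Θ := by
    have := le T' ⟨ht, le_rfl⟩
    simp only [hg, sub_self, zero_mul] at this
    exact this
  have key : ∀ t ∈ Icc t₀ T', g t ≤ L + (κ ^ r)⁻¹ * Θ := by
    intro t h
    have Fp : 0 < F t ^ r := rpow_pos_of_pos (hpos t h) r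
    set t' := t + L * (F t ^ r)⁻¹ with ht'
    have ge : t ≤ t' := by rw [ht']; have : 0 < L * (F t ^ r)⁻¹ := by positivity
                           linarith
    have e : (t' - t) * F t ^ r = L := by rw [ht']; field_simp; ring
    rcases le_total T' t' with hc | hc
    · have : g t ≤ L := by
        rw [← e]; simp only [hg]; gcongr
      have := mul_nonneg kinv0.le Θ0
      linarith
    · have hmem : t' ∈ Icc t₀ T' := ⟨h.1.trans ge, hc⟩
      have a1 := hs t h t' hmem ht'
      have a2 := le t' hmem
      have a3 : κ ^ r * F t ^ r ≤ F t' ^ r := by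
        rw [← mul_rpow (by linarith) (hpos t h).le]
        exact rpow_le_rpow (mul_pos (by linarith) (hpos t h)).le a1 hr.le
      have a4 : F t ^ r ≤ (κ ^ r)⁻¹ * F t' ^ r := by
        rw [le_inv_mul_iff₀ (by linarith)]; exact a3
      have : g t = L + (T' - t') * F t ^ r := by rw [← e]; simp only [hg]; ring
      rw [this]
      have : (T' - t') * F t ^ r ≤ (κ ^ r)⁻¹ * g t' := by
        simp only [hg]
        calc _ ≤ (T' - t') * ((κ ^ r)⁻¹ * F t' ^ r) := by gcongr
          _ = _ := by ring
      have : (κ ^ r)⁻¹ * g t' ≤ (κ ^ r)⁻¹ * Θ := by gcongr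
      linarith
  have : Θ ≤ L + (κ ^ r)⁻¹ * Θ := by
    apply csSup_le (⟨g t₀, mem_image_of_mem g ⟨le_rfl, ht⟩⟩ : (g '' Icc t₀ T').Nonempty)
    rintro _ ⟨t, h, rfl⟩
    exact key t h
  calc _ ≤ Θ := le t₀ ⟨le_rfl, ht⟩
    _ ≤ _ := by rw [le_div_iff₀ (by linarith)]; linarith

variable {p s₀ T : ℝ} {m F : ℝ → ℝ} {A : ℝ → ℝ → ℝ}

lemma doubling_core (hp : 1 < p) (H : AbS p s₀ T m F A) {κ a t μ : ℝ} (ha : 0 < a) (hat : a ≤ t)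
    (htT : t < T) (hμ : 0 < μ) (hm : m t = 2 * μ) (hma : m a ≤ μ)
    (hκ : 48 * (2 : ℝ) ^ (p + 1) * κ = 1)
    (hx : 2 * μ ^ (1 - p) ≤ s₀) (hF : |F a| ≤ μ ^ (p + 1)) :
    κ / 32 * (μ ^ (p + 1)) ^ 2 ≤ (F t - F a) ^ 2 := by
  have hc : ContinuousOn m (Icc a t) := H.mc.mono (fun τ h => ⟨by linarith [h.1], by linarith [h.2]⟩)
  obtain ⟨t₁, h1, hm1, hge⟩ := last_hit hat hc hma (by linarith)
  have b0 : (0:ℝ) < 2 ^ (p + 1) := by positivity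
  have b2 : (2:ℝ) ≤ 2 ^ (p + 1) := by
    conv_lhs => rw [← rpow_one 2]
    exact rpow_le_rpow_of_exponent_le (by norm_num) (by linarith)
  have κ0 : 0 < κ := by
    by_contra! h
    have := mul_nonpos_of_nonneg_of_nonpos (by positivity : 0 ≤ 48 * (2 : ℝ) ^ (p + 1)) h
    linarith
  set y := μ ^ (1 - p) with hy
  set P := μ ^ (p + 1) with hP
  have y0 : 0 < y := by positivity
  have P0 : 0 < P := by positivity
  have yP : y * P = μ ^ 2 := by
    rw [hy, hP, ← rpow_add hμ, ← rpow_natCast μ 2]; congr 1; push_cast; ring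
  have yμ : 2 * y * μ ^ (p - 1) = 2 := by
    rw [hy, mul_assoc, ← rpow_add hμ]; simp
  have κ1 : κ ≤ 2 := by
    by_contra! h
    nlinarith
  have t₁T : t₁ < T := by linarith [h1.2]
  have t₁0 : 0 < t₁ := by linarith [h1.1]
  have Fa1 := H.Fm a t₁ ha h1.1 t₁T
  have F1t := H.Fm t₁ t t₁0 h1.2 htT
  have hη : 0 < κ * y := by positivity
  have hηs : κ * y ≤ s₀ := by nlinarith
  have c1 := H.C1 t₁ t μ (2 * y) t₁0 h1.2 htT hμ (by positivity) hx yμ hge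
  have c2 := H.C2 t₁ t (κ * y) t₁0 h1.2 htT hη hηs
  have c3 := H.C3 t (κ * y) (by linarith) htT hη hηs
  have c4 := H.C3 t₁ (κ * y) t₁0 t₁T hη hηs
  rw [hm] at c3
  rw [hm1] at c4
  have absF := neg_abs_le (F a)
  set η := κ * y with hηd
  have e3 : (2 * μ) ^ (p + 1) = 2 ^ (p + 1) * P := by rw [mul_rpow (by norm_num) hμ.le]
  rw [e3] at c3
  have dv : ∀ Z : ℝ, 0 ≤ Z → Z / (p + 1) ≤ Z / 2 := fun Z hZ =>
    div_le_div_of_nonneg_left hZ (by norm_num) (by linarith)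
  have η2 : η ^ 3 * (3 * (2 ^ (p + 1) * P)) = (η * μ / 4) ^ 2 := by
    have : η ^ 3 * (3 * (2 ^ (p + 1) * P)) = η ^ 2 * (48 * 2 ^ (p + 1) * κ) * (y * P) / 16 := by
      rw [hηd]; ring
    rw [this, hκ, yP]; ring
  have PP : P ≤ 2 ^ (p + 1) * P := le_mul_of_one_le_left P0.le (by linarith)
  have d3 : (A t η - η * (2 * μ)) ^ 2 ≤ (η * μ / 4) ^ 2 := by
    rw [← η2]
    refine c3.trans ?_
    have := dv (2 ^ (p + 1) * P) (by positivity)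
    refine mul_le_mul_of_nonneg_left ?_ (by positivity)
    linarith
  have d4 : (A t₁ η - η * μ) ^ 2 ≤ (η * μ / 4) ^ 2 := by
    rw [← η2]
    refine c4.trans ?_
    have := dv P (by positivity)
    refine mul_le_mul_of_nonneg_left ?_ (by positivity)
    linarith
  have f3 := abs_le_of_sq_le_sq' d3 (by positivity)
  have f4 := abs_le_of_sq_le_sq' d4 (by positivity)
  have g : η * μ / 2 ≤ A t η - A t₁ η := by linarith [f3.1, f4.2]
  have g2 : (η * μ / 2) ^ 2 ≤ η * (t - t₁) * (F t - F t₁) :=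
    (pow_le_pow_left₀ (by positivity) g 2).trans c2
  have g3 : (η * μ / 2) ^ 2 * μ ^ 2 ≤ η * (F t - F t₁) * ((2 * y) ^ 3 * (F t - F t₁)) := by
    calc _ ≤ η * (t - t₁) * (F t - F t₁) * μ ^ 2 := by gcongr
      _ = η * (F t - F t₁) * ((t - t₁) * μ ^ 2) := by ring
      _ ≤ _ := by
        have : 0 ≤ F t - F t₁ := by linarith
        gcongr
  have g4 : 8 * κ * y ^ 4 * (κ / 32 * P ^ 2) ≤ 8 * κ * y ^ 4 * (F t - F t₁) ^ 2 := by
    have e1 : (η * μ / 2) ^ 2 * μ ^ 2 = η ^ 2 * (μ ^ 2) ^ 2 / 4 := by ring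
    rw [e1, ← yP, hηd] at g3
    linarith
  have g5 := le_of_mul_le_mul_left g4 (by positivity)
  refine g5.trans ?_
  apply pow_le_pow_left₀ <;> linarith

lemma doubling (hp : 1 < p) (h0 : 0 < s₀) (H : AbS p s₀ T m F A) (hT : 0 < T) :
    ∃ c > 0, ∃ M₀, ∀ t ∈ Ico (T / 2) T, M₀ ≤ m t → c * m t ^ (p + 1) ≤ F t := by
  set a := T / 2 with ha
  obtain ⟨κ, hκ⟩ : ∃ κ : ℝ, 48 * (2 : ℝ) ^ (p + 1) * κ = 1 :=
    ⟨(48 * (2 : ℝ) ^ (p + 1))⁻¹, mul_inv_cancel₀ (by positivity)⟩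
  have κ0 : 0 < κ := by
    by_contra! h
    have := mul_nonpos_of_nonneg_of_nonpos (by positivity : 0 ≤ 48 * (2 : ℝ) ^ (p + 1)) h
    linarith
  set c1 := √(κ / 32) with hc1
  have c10 : 0 < c1 := Real.sqrt_pos.2 (by positivity)
  have ev : ∀ᶠ M in atTop, 0 < M / 2 ∧ m a ≤ M / 2 ∧ 2 * (M / 2) ^ (1 - p) ≤ s₀ ∧
      |F a| ≤ (M / 2) ^ (p + 1) ∧ 2 * |F a| / c1 ≤ (M / 2) ^ (p + 1) := by
    have t2 : Tendsto (fun M : ℝ => M / 2) atTop atTop := tendsto_id.atTop_div_const (by norm_num)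
    have tp : Tendsto (fun M : ℝ => (M / 2) ^ (p + 1)) atTop atTop :=
      (tendsto_rpow_atTop (by linarith)).comp t2
    have tn : Tendsto (fun M : ℝ => 2 * (M / 2) ^ (1 - p)) atTop (𝓝 (2 * 0)) := by
      apply Tendsto.const_mul
      have := (tendsto_rpow_neg_atTop (by linarith : 0 < p - 1)).comp t2
      simpa [Function.comp_def] using this
    rw [mul_zero] at tn
    filter_upwards [t2.eventually_gt_atTop 0, t2.eventually_ge_atTop (m a),
      tn.eventually (gt_mem_nhds h0), tp.eventually_ge_atTop |F a|,
      tp.eventually_ge_atTop (2 * |F a| / c1)] with M h1 h2 h3 h4 h5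
    exact ⟨h1, h2, h3.le, h4, h5⟩
  obtain ⟨M₀, hM₀⟩ := eventually_atTop.1 ev
  refine ⟨c1 / 2 / 2 ^ (p + 1), by positivity, M₀, fun t ht hM => ?_⟩
  obtain ⟨h1, h2, h3, h4, h5⟩ := hM₀ _ hM
  set μ := m t / 2 with hμ
  have core := doubling_core hp H (by linarith : 0 < a) ht.1 ht.2 h1 (by rw [hμ]; ring) h2 hκ h3 h4
  have e : κ / 32 = c1 ^ 2 := by rw [hc1, Real.sq_sqrt (by positivity)]
  rw [e, ← mul_pow] at core
  have Fm := H.Fm a t (by linarith) ht.1 ht.2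
  have k := abs_le_of_sq_le_sq' core (by linarith)
  rw [div_le_iff₀ c10] at h5
  have e2 : m t ^ (p + 1) = 2 ^ (p + 1) * μ ^ (p + 1) := by
    rw [← mul_rpow (by norm_num) h1.le]; congr 1; rw [hμ]; ring
  rw [e2]
  have e3 : c1 / 2 / 2 ^ (p + 1) * (2 ^ (p + 1) * μ ^ (p + 1)) = c1 / 2 * μ ^ (p + 1) := by
    field_simp
  rw [e3]
  have := neg_abs_le (F a)
  nlinarith [k.2]

lemma rate (hp : 1 < p) (h0 : 0 < s₀) (H : AbS p s₀ T m F A) (hT : 0 < T) :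
    ∃ C, ∀ t ∈ Ico (T / 2) T, (T - t) ^ (1 / (2 * (p - 1))) * m t ≤ C := by
  obtain ⟨c, hc, M₀, hM₀⟩ := doubling hp h0 H hT
  set r := 2 * (p - 1) / (p + 1) with hr
  have r0 : 0 < r := by rw [hr]; apply div_pos <;> linarith
  set β := 1 / (2 * (p - 1)) with hβ
  have β0 : 0 < β := by rw [hβ]; apply div_pos <;> linarith
  obtain ⟨F₁, hF₁⟩ : ∃ F₁ : ℝ, ∀ f ≥ F₁, 0 < f ∧ 2 * (f ^ (1 / (p + 1))) ^ (1 - p) ≤ s₀ := by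
    apply eventually_atTop.1
    have t2 : Tendsto (fun f : ℝ => f ^ (1 / (p + 1))) atTop atTop :=
      tendsto_rpow_atTop (by apply div_pos <;> linarith)
    have tn : Tendsto (fun f : ℝ => 2 * (f ^ (1 / (p + 1))) ^ (1 - p)) atTop (𝓝 (2 * 0)) := by
      apply Tendsto.const_mul
      have := (tendsto_rpow_neg_atTop (by linarith : 0 < p - 1)).comp t2
      simpa [Function.comp_def] using this
    rw [mul_zero] at tn
    filter_upwards [eventually_gt_atTop 0, tn.eventually (gt_mem_nhds h0)] with f h1 h2
    exact ⟨h1, h2.le⟩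
  obtain ⟨M₁, hM₁⟩ : ∃ M₁ : ℝ, ∀ M ≥ M₁, 0 < M ∧ M₀ ≤ M ∧ F₁ ≤ c * M ^ (p + 1) := by
    apply eventually_atTop.1
    have tp : Tendsto (fun M : ℝ => c * M ^ (p + 1)) atTop atTop :=
      (tendsto_rpow_atTop (by linarith)).const_mul_atTop hc
    filter_upwards [eventually_gt_atTop 0, eventually_ge_atTop M₀, tp.eventually_ge_atTop F₁]
      with M h1 h2 h3
    exact ⟨h1, h2, h3⟩
  set lam : ℝ := 2 ^ (p + 1) - 1 with hlam
  have b1 : (1:ℝ) < 2 ^ (p + 1) := one_lt_rpow (by norm_num) (by linarith)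
  have lam0 : 0 < lam := by rw [hlam]; linarith
  set K := 8 * lam / (1 - (((2:ℝ) ^ (p + 1)) ^ r)⁻¹) with hK
  have step : ∀ t, T / 2 ≤ t → t < T → F₁ ≤ F t → ∀ T', t ≤ T' → T' < T →
      (T' - t) * F t ^ r ≤ K := by
    intro t ht htT hF T' htT' hT'
    have Fge : ∀ τ ∈ Icc t T', F₁ ≤ F τ := fun τ h =>
      hF.trans (H.Fm t τ (by linarith) h.1 (by linarith [h.2]))
    apply rate_abs r0 (by positivity) b1 htT' (fun τ h => (hF₁ _ (Fge τ h)).1)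
      (fun τ h => H.Fm τ T' (by linarith [h.1]) h.2 hT')
    intro a ha b hb hab
    obtain ⟨f0, f1⟩ := hF₁ _ (Fge a ha)
    set μ := F a ^ (1 / (p + 1)) with hμ
    have μ0 : 0 < μ := by positivity
    set y := μ ^ (1 - p) with hy
    have y0 : 0 < y := by positivity
    have pF : μ ^ (p + 1) = F a := by
      rw [hμ, ← rpow_mul f0.le, one_div, inv_mul_cancel₀ (by linarith), rpow_one]
    have yP : y * F a = μ ^ 2 := by
      rw [← pF, hy, ← rpow_add μ0, ← rpow_natCast μ 2]; congr 1; push_cast; ring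
    have yμ : 2 * y * μ ^ (p - 1) = 2 := by
      rw [hy, mul_assoc, ← rpow_add μ0]; simp
    have yr : (F a ^ r)⁻¹ = y ^ 2 := by
      rw [← rpow_neg f0.le, ← pF, hy, ← rpow_mul μ0.le, ← rpow_natCast, ← rpow_mul μ0.le]
      congr 1
      rw [hr]
      have : p + 1 ≠ 0 := by linarith
      push_cast
      field_simp
      ring
    rw [yr] at hab
    have a0 : 0 < a := by linarith [ha.1]
    have hle : a ≤ b := by rw [hab]; have : 0 < 8 * lam * y ^ 2 := by positivity
                           linarith
    have bT : b < T := by linarith [hb.2]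
    have c1 := H.C1 a b μ (2 * y) a0 hle bT μ0 (by positivity) f1 yμ (by
      intro τ hτ
      have τ0 : 0 < τ := by linarith [hτ.1]
      have τT : τ < T := by linarith [hτ.2]
      have h4 := H.C4 τ τ0 τT
      have hmon := H.Fm a τ a0 hτ.1 τT
      have : μ ^ (p + 1) ≤ m τ ^ (p + 1) := by
        rw [pF]; nlinarith
      exact (rpow_le_rpow_iff μ0.le (H.mn τ ⟨τ0, τT⟩) (by linarith)).1 this)
    have e1 : (b - a) * μ ^ 2 = 8 * y ^ 3 * (lam * F a) := by rw [← yP, hab]; ring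
    have e2 : (2 * y) ^ 3 * (F b - F a) = 8 * y ^ 3 * (F b - F a) := by ring
    rw [e1, e2] at c1
    have := le_of_mul_le_mul_left c1 (by positivity)
    rw [hlam] at this
    linarith
  refine ⟨max (T ^ β * |M₁|) ((K / c ^ r) ^ β), fun t ht => ?_⟩
  have mn := H.mn t ⟨by linarith [ht.1], ht.2⟩
  have Tt : 0 ≤ T - t := by linarith [ht.2]
  rcases lt_or_ge (m t) M₁ with h | h
  · apply le_max_of_le_left
    have h1 : (T - t) ^ β ≤ T ^ β := rpow_le_rpow Tt (by linarith [ht.1]) β0.le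
    have h2 : m t ≤ |M₁| := h.le.trans (le_abs_self _)
    apply mul_le_mul h1 h2 mn (by positivity)
  · apply le_max_of_le_right
    obtain ⟨h1, h2, h3⟩ := hM₁ _ h
    have h4 := hM₀ t ht h2
    have st := step t ht.1 ht.2 (h3.trans h4)
    have lim : (T - t) * F t ^ r ≤ K := by
      have tt : Tendsto (fun T' => (T' - t) * F t ^ r) (𝓝[<] T) (𝓝 ((T - t) * F t ^ r)) := by
        apply Tendsto.mono_left _ nhdsWithin_le_nhds
        exact (by fun_prop : Continuous fun T' => (T' - t) * F t ^ r).tendsto T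
      apply le_of_tendsto tt
      filter_upwards [Ioo_mem_nhdsLT ht.2] with T' hT'
      exact st T' hT'.1.le hT'.2
    have e1 : (c * m t ^ (p + 1)) ^ r = c ^ r * m t ^ (2 * (p - 1)) := by
      rw [mul_rpow hc.le (by positivity), ← rpow_mul mn]
      congr 2
      rw [hr]; field_simp
    have h5 : c ^ r * m t ^ (2 * (p - 1)) ≤ F t ^ r := by
      rw [← e1]; exact rpow_le_rpow (by positivity) h4 r0.le
    have h6 : (T - t) * m t ^ (2 * (p - 1)) ≤ K / c ^ r := by
      rw [le_div_iff₀ (by positivity)]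
      calc _ = (T - t) * (c ^ r * m t ^ (2 * (p - 1))) := by ring
        _ ≤ (T - t) * F t ^ r := by gcongr
        _ ≤ K := lim
    have h7 := rpow_le_rpow (by positivity) h6 β0.le
    rw [mul_rpow Tt (by positivity), ← rpow_mul mn] at h7
    have : 2 * (p - 1) * β = 1 := by rw [hβ]; exact mul_one_div_cancel (by linarith)
    rwa [this, rpow_one] at h7

end partG

section partK


lemma left_deriv_nonpos {g : ℝ → ℝ} {g' a : ℝ} (h : HasDerivAt g g' a)
    (hm : ∀ᶠ τ in 𝓝[<] a, g a ≤ g τ) : g' ≤ 0 := by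
  have h1 := (hasDerivWithinAt_iff_tendsto_slope' (s := Iio a) (by simp)).1 h.hasDerivWithinAt
  apply le_of_tendsto h1
  filter_upwards [hm, self_mem_nhdsWithin] with τ h1 h2
  rw [slope_def_field]
  have : τ < a := h2
  exact div_nonpos_of_nonneg_of_nonpos (by linarith) (by linarith)

lemma second_deriv_nonneg {f f' : ℝ → ℝ} {f'' b : ℝ} (h1 : ∀ᶠ x in 𝓝 b, HasDerivAt f (f' x) x)
    (h2 : HasDerivAt f' f'' b) (hm : IsLocalMin f b) : 0 ≤ f'' := by
  by_contra! hneg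
  have e : deriv f =ᶠ[𝓝 b] f' := h1.mono fun x hx => hx.deriv
  have dd : deriv (deriv f) b = f'' := by rw [e.deriv_eq]; exact h2.deriv
  have mx : IsLocalMax f b := isLocalMax_of_deriv_deriv_neg (by rw [dd]; exact hneg)
    hm.deriv_eq_zero h1.self_of_nhds.continuousAt
  have c : f =ᶠ[𝓝 b] fun _ => f b := by
    filter_upwards [hm, mx] with x a1 a2
    exact le_antisymm a2 a1
  have c2 : deriv f =ᶠ[𝓝 b] fun _ => 0 := by
    have := c.deriv
    simpa using this
  have : deriv (deriv f) b = 0 := by rw [c2.deriv_eq]; simp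
  linarith

section comp
variable {p s₀ T : ℝ} {φ s : ℝ → ℝ} {u : ℝ → ℝ → ℝ}

lemma sol_cpt (H : IsSolOn p s₀ φ T s u) {t₀ t₁ δ : ℝ} (h0 : 0 < t₀) (h1 : t₁ ≤ T)
    (hδ : δ < s₀) :
    IsCompact {q : ℝ × ℝ | q.1 ∈ Icc t₀ t₁ ∧ q.2 ∈ Icc δ (s q.1)} := by
  have sc : ContinuousOn s (Icc t₀ t₁) := H.s_cont.mono (Icc_subset_Icc h0.le h1)
  have K : IsCompact (Icc t₀ t₁ ×ˢ Icc (0:ℝ) 1) := isCompact_Icc.prod isCompact_Icc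
  have c : ContinuousOn (fun q : ℝ × ℝ => ((q.1, δ + q.2 * (s q.1 - δ)) : ℝ × ℝ))
      (Icc t₀ t₁ ×ˢ Icc (0:ℝ) 1) := by
    have s1 : ContinuousOn (fun q : ℝ × ℝ => s q.1) (Icc t₀ t₁ ×ˢ Icc (0:ℝ) 1) :=
      sc.comp continuousOn_fst (fun q hq => hq.1)
    exact continuousOn_fst.prodMk (continuousOn_const.add
      (continuousOn_snd.mul (s1.sub continuousOn_const)))
  convert K.image_of_continuousOn c using 1
  ext ⟨t, x⟩
  constructor
  · rintro ⟨ht, hx⟩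
    simp only at ht hx
    have st : s₀ ≤ s t := sol_s0 H (by linarith [ht.1]) (by linarith [ht.2])
    have pos : 0 < s t - δ := by linarith
    refine ⟨(t, (x - δ) / (s t - δ)), ⟨ht, ⟨div_nonneg (by linarith [hx.1]) pos.le, ?_⟩⟩, ?_⟩
    · rw [div_le_one pos]; linarith [hx.2]
    · simp only [Prod.mk.injEq, true_and]
      field_simp
      ring
  · rintro ⟨⟨t', θ⟩, ⟨ht, hθ⟩, he⟩
    simp only [Prod.mk.injEq] at he ht hθ
    obtain ⟨rfl, rfl⟩ := he
    have st : s₀ ≤ s t' := sol_s0 H (by linarith [ht.1]) (by linarith [ht.2])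
    refine ⟨ht, ?_, ?_⟩
    · simp only; nlinarith [hθ.1]
    · simp only; nlinarith [hθ.2]

lemma sol_comp (H : IsSolOn p s₀ φ T s u) {t₀ t₁ δ : ℝ} (h0 : 0 < t₀) (h1 : t₁ ≤ T)
    (hδ0 : 0 ≤ δ) (hδ : δ < s₀) {v vt vx vxx : ℝ → ℝ → ℝ}
    (vc : ContinuousOn (fun q : ℝ × ℝ => v q.1 q.2)
      {q : ℝ × ℝ | q.1 ∈ Icc t₀ t₁ ∧ q.2 ∈ Icc δ (s q.1)})
    (hvt : ∀ t ∈ Icc t₀ t₁, ∀ x ∈ Ioo δ (s t), HasDerivAt (fun τ => v τ x) (vt t x) t)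
    (hvx : ∀ t ∈ Icc t₀ t₁, ∀ x ∈ Ioo δ (s t), HasDerivAt (v t) (vx t x) x)
    (hvxx : ∀ t ∈ Icc t₀ t₁, ∀ x ∈ Ioo δ (s t), HasDerivAt (vx t) (vxx t x) x)
    (hsup : ∀ t ∈ Icc t₀ t₁, ∀ x ∈ Ioo δ (s t), vxx t x ≤ vt t x)
    (b0 : ∀ x ∈ Icc δ (s t₀), u t₀ x ≤ v t₀ x)
    (bl : ∀ t ∈ Icc t₀ t₁, u t δ ≤ v t δ)
    (br : ∀ t ∈ Icc t₀ t₁, 0 ≤ v t (s t)) :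
    ∀ t ∈ Icc t₀ t₁, ∀ x ∈ Icc δ (s t), u t x ≤ v t x := by
  intro ts hts xs hxs
  by_contra! hlt
  set ε := (u ts xs - v ts xs) / (2 * (ts - t₀ + 1)) with hε
  have d0 : 0 < ts - t₀ + 1 := by linarith [hts.1]
  have ε0 : 0 < ε := div_pos (by linarith) (by linarith)
  have εe : ε * (ts - t₀ + 1) = (u ts xs - v ts xs) / 2 := by rw [hε]; field_simp
  set Q := {q : ℝ × ℝ | q.1 ∈ Icc t₀ t₁ ∧ q.2 ∈ Icc δ (s q.1)} with hQ
  have cQ : IsCompact Q := sol_cpt H h0 h1 hδ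
  have uc : ContinuousOn (fun q : ℝ × ℝ => u q.1 q.2) Q := H.u_cont.mono (by
    rintro ⟨t, x⟩ ⟨ht, hx⟩
    exact ⟨⟨h0.le.trans ht.1, ht.2.trans h1⟩, hδ0.trans hx.1, hx.2⟩)
  set z : ℝ × ℝ → ℝ := fun q => v q.1 q.2 - u q.1 q.2 + ε * (q.1 - t₀ + 1) with hz
  have zc : ContinuousOn z Q := (vc.sub uc).add (by fun_prop)
  obtain ⟨⟨a, b⟩, ⟨ha, hb⟩, hmin⟩ := cQ.exists_isMinOn ⟨(ts, xs), hts, hxs⟩ zc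
  simp only at ha hb
  have hmin' : ∀ t ∈ Icc t₀ t₁, ∀ x ∈ Icc δ (s t), z (a, b) ≤ z (t, x) := fun t ht x hx =>
    hmin (show (t, x) ∈ Q from ⟨ht, hx⟩)
  have zneg : z (a, b) < 0 := by
    have := hmin' ts hts xs hxs
    have e : z (ts, xs) = v ts xs - u ts xs + ε * (ts - t₀ + 1) := rfl
    rw [e, εe] at this
    linarith
  have zab : z (a, b) = v a b - u a b + ε * (a - t₀ + 1) := rfl
  have εp : 0 < ε * (a - t₀ + 1) := mul_pos ε0 (by linarith [ha.1])
  have at0 : t₀ < a := by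
    rcases ha.1.eq_or_lt with h | h
    · subst h
      have := b0 b hb
      linarith
    · exact h
  have a0 : 0 < a := by linarith
  have haT : a ∈ Ioc 0 T := ⟨a0, ha.2.trans h1⟩
  have bδ : δ < b := by
    rcases hb.1.eq_or_lt with h | h
    · have := bl a ha
      rw [h] at this
      linarith
    · exact h
  have bs : b < s a := by
    rcases hb.2.eq_or_lt with h | h
    · have := br a ha
      have := H.bc_free a haT
      have k1 : v a b = v a (s a) := by rw [h]
      have k2 : u a b = u a (s a) := by rw [h]
      linarith
    · exact h
  have b00 : b ∈ Ioo 0 (s a) := ⟨by linarith, bs⟩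
  have dt : HasDerivAt (fun τ => z (τ, b)) (vt a b - deriv (fun τ => u τ b) a + ε) a := by
    have := ((hvt a ha b ⟨bδ, bs⟩).sub (H.ut_diff a haT b b00).hasDerivAt).add
      ((((hasDerivAt_id a).sub_const t₀).add_const 1).const_mul ε)
    simp only [mul_one] at this
    exact this
  have ineq1 : vt a b - deriv (fun τ => u τ b) a + ε ≤ 0 := by
    apply left_deriv_nonpos dt
    have sca : ContinuousAt s a := (H.s_diff a haT).continuousAt
    have e1 : ∀ᶠ τ in 𝓝[<] a, b < s τ :=
      (sca.eventually (lt_mem_nhds bs)).filter_mono nhdsWithin_le_nhds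
    filter_upwards [e1, Ioo_mem_nhdsLT at0] with τ h2 h3
    exact hmin' τ ⟨h3.1.le, by linarith [h3.2, ha.2]⟩ b ⟨bδ.le, h2.le⟩
  have nb : Ioo δ (s a) ∈ 𝓝 b := Ioo_mem_nhds bδ bs
  have ineq2 : 0 ≤ vxx a b - deriv (deriv (u a)) b := by
    apply second_deriv_nonneg (f := fun x => z (a, x)) (f' := fun x => vx a x - deriv (u a) x)
      (b := b)
    · filter_upwards [nb] with x hx
      have hx' : x ∈ Ioo 0 (s a) := ⟨by linarith [hx.1], hx.2⟩
      exact ((hvx a ha x hx).sub (H.ux_diff a haT x hx').hasDerivAt).add_const (ε * (a - t₀ + 1))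
    · exact (hvxx a ha b ⟨bδ, bs⟩).sub (H.uxx_diff a haT b b00).hasDerivAt
    · filter_upwards [nb] with x hx
      exact hmin' a ha x ⟨hx.1.le, hx.2.le⟩
  have := hsup a ha b ⟨bδ, bs⟩
  have := H.heat a haT b b00
  linarith

lemma part2 (hp : 1 < p) (h0 : 0 < s₀) (hT : 0 < T)
    (H : ∀ T' : ℝ, 0 < T' → T' < T → IsSolOn p s₀ φ T' s u) {C β : ℝ} (hβ : 0 < β)
    (hC : ∀ t ∈ Ico (T / 2) T, (T - t) ^ β * u t 0 ≤ C) {δ : ℝ} (hδ : 0 < δ) :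
    ∃ C', ∀ t ∈ Ico (T / 2) T, ∀ x ∈ Icc δ (s t), u t x ≤ C' := by
  set t₀ := T / 2 with ht₀
  have t₀0 : 0 < t₀ := by linarith
  have t₀T : t₀ < T := by linarith
  have H0 := H t₀ t₀0 t₀T
  have s0p := H0.s_pos t₀ ⟨t₀0.le, le_rfl⟩
  obtain ⟨B, hB⟩ := (isCompact_Icc (a := 0) (b := s t₀)).bddAbove_image
    (sol_u_slice H0 ⟨t₀0.le, le_rfl⟩)
  have hB' : ∀ x ∈ Icc 0 (s t₀), u t₀ x ≤ B := fun x hx => hB ⟨x, hx, rfl⟩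
  set k := 1 / (4 * β + 2) with hk
  have k0 : 0 < k := by rw [hk]; positivity
  have kk : k * (4 * β + 2) = 1 := by rw [hk]; field_simp
  set A := max (max C 0) (B * (k * s t₀ ^ 2 + T / 2) ^ β) with hA
  have A0 : 0 ≤ A := (le_max_right C 0).trans (le_max_left _ _)
  have AC : C ≤ A := (le_max_left C 0).trans (le_max_left _ _)
  have AB : B * (k * s t₀ ^ 2 + T / 2) ^ β ≤ A := le_max_right _ _
  refine ⟨A * (k * δ ^ 2) ^ (-β), fun t ht x hx => ?_⟩
  have ht0 : 0 < t := by linarith [ht.1]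
  have Ht := H t ht0 ht.2
  have Dpos : ∀ τ ∈ Icc t₀ t, ∀ y : ℝ, 0 < k * y ^ 2 + T - τ := by
    intro τ hτ y
    have : τ < T := by linarith [hτ.2, ht.2]
    have : 0 ≤ k * y ^ 2 := by positivity
    linarith
  have main := sol_comp Ht (t₀ := t₀) (t₁ := t) (δ := 0) t₀0 le_rfl le_rfl h0
    (v := fun τ y => A * (k * y ^ 2 + T - τ) ^ (-β))
    (vt := fun τ y => A * β * (k * y ^ 2 + T - τ) ^ (-β - 1))
    (vx := fun τ y => A * (-β * (2 * k * y) * (k * y ^ 2 + T - τ) ^ (-β - 1)))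
    (vxx := fun τ y => A * (-β * (2 * k) * (k * y ^ 2 + T - τ) ^ (-β - 1) +
      (-β * (2 * k * y)) * ((2 * k * y) * (-β - 1) * (k * y ^ 2 + T - τ) ^ (-β - 1 - 1))))
    (by
      apply continuousOn_const.mul
      apply ContinuousOn.rpow_const (by fun_prop)
      rintro ⟨τ, y⟩ ⟨hτ, hy⟩
      exact Or.inl (Dpos τ hτ y).ne')
    (by
      intro τ hτ y hy
      have d : HasDerivAt (fun τ => k * y ^ 2 + T - τ) (-1) τ :=
        (hasDerivAt_id τ).const_sub _
      refine ((d.rpow_const (p := -β) (Or.inl (Dpos τ hτ y).ne')).const_mul A).congr_deriv ?_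
      ring)
    (by
      intro τ hτ y hy
      have d : HasDerivAt (fun y => k * y ^ 2 + T - τ) (2 * k * y) y := by
        refine ((((hasDerivAt_id y).pow 2).const_mul k).add_const T |>.sub_const τ).congr_deriv ?_
        simp; ring
      refine ((d.rpow_const (p := -β) (Or.inl (Dpos τ hτ y).ne')).const_mul A).congr_deriv ?_
      ring)
    (by
      intro τ hτ y hy
      have d : HasDerivAt (fun y => k * y ^ 2 + T - τ) (2 * k * y) y := by
        refine ((((hasDerivAt_id y).pow 2).const_mul k).add_const T |>.sub_const τ).congr_deriv ?_
        simp; ring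
      have d2 : HasDerivAt (fun y => -β * (2 * k * y)) (-β * (2 * k)) y := by
        refine (((hasDerivAt_id y).const_mul (2 * k)).const_mul (-β)).congr_deriv ?_
        simp
      exact (d2.mul (d.rpow_const (p := -β - 1) (Or.inl (Dpos τ hτ y).ne'))).const_mul A)
    (by
      intro τ hτ y hy
      set D := k * y ^ 2 + T - τ with hD
      have D0 : 0 < D := Dpos τ hτ y
      have e : D ^ (-β - 1) = D * D ^ (-β - 1 - 1) := by
        rw [rpow_sub_one D0.ne' (-β - 1)]; field_simp
      have E0 : 0 < D ^ (-β - 1 - 1) := by positivity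
      set E := D ^ (-β - 1 - 1) with hE
      rw [e]
      have kD : k * y ^ 2 ≤ D := by rw [hD]; linarith [hτ.2, ht.2]
      have : β * E * (4 * k * (β + 1) * (k * y ^ 2)) ≤ β * E * (4 * k * (β + 1) * D) := by gcongr
      have : A * (-β * (2 * k) * (D * E) + -β * (2 * k * y) * (2 * k * y * (-β - 1) * E)) =
        A * (β * E * (4 * k * (β + 1) * (k * y ^ 2)) - 2 * k * β * E * D) := by ring
      rw [this]
      have : A * β * (D * E) = A * (β * E * (4 * k * (β + 1) * D) - 2 * k * β * E * D) := by
        calc A * β * (D * E) = A * β * (D * E) * (k * (4 * β + 2)) := by rw [kk, mul_one]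
          _ = _ := by ring
      rw [this]
      gcongr)
    (by
      intro y hy
      have D0 := Dpos t₀ ⟨le_rfl, ht.1⟩ y
      have D1 : k * y ^ 2 + T - t₀ ≤ k * s t₀ ^ 2 + T / 2 := by
        have : y ^ 2 ≤ s t₀ ^ 2 := pow_le_pow_left₀ hy.1 hy.2 2
        have : k * y ^ 2 ≤ k * s t₀ ^ 2 := by gcongr
        linarith
      have B0 : 0 ≤ B := (H0.u_nonneg t₀ ⟨t₀0.le, le_rfl⟩ y hy).trans (hB' y hy)
      rw [rpow_neg D0.le, ← div_eq_mul_inv, le_div_iff₀ (by positivity)]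
      refine le_trans ?_ AB
      apply mul_le_mul (hB' y hy) (rpow_le_rpow D0.le D1 hβ.le) (by positivity) B0)
    (by
      intro τ hτ
      have := hC τ ⟨hτ.1, by linarith [hτ.2, ht.2]⟩
      have D0 := Dpos τ hτ 0
      have e : k * 0 ^ 2 + T - τ = T - τ := by ring
      rw [e] at D0 ⊢
      rw [rpow_neg D0.le, ← div_eq_mul_inv, le_div_iff₀ (by positivity)]
      linarith)
    (by
      intro τ hτ
      have := Dpos τ hτ (s τ)
      positivity)
  have := main t ⟨ht.1, le_rfl⟩ x ⟨hδ.le.trans hx.1, hx.2⟩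
  refine this.trans ?_
  apply mul_le_mul_of_nonneg_left _ A0
  apply rpow_le_rpow_of_nonpos (by positivity) _ (by linarith)
  have : δ ^ 2 ≤ x ^ 2 := pow_le_pow_left₀ hδ.le hx.1 2
  have : k * δ ^ 2 ≤ k * x ^ 2 := by gcongr
  linarith [ht.2]

lemma sol_ux_ge (H : IsSolOn p s₀ φ T s u) {t δ K : ℝ} (ht : t ∈ Ioc 0 T) (hδ0 : 0 ≤ δ)
    (hδ : δ < s t) (hK : ∀ x ∈ Icc δ (s t), u t x ≤ K * (s t - x)) :
    -K ≤ deriv (u t) (s t) := by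
  by_contra! hc
  have c := (sol_ux_slice H ht) (s t) ⟨hδ0.trans hδ.le, le_rfl⟩
  have ev := c.eventually (gt_mem_nhds hc)
  rw [nhdsWithin_Icc_eq_nhdsLE (hδ0.trans_lt hδ)] at ev
  obtain ⟨l, hl, hl2⟩ := (mem_nhdsLE_iff_exists_Ioc_subset' hδ).1 ev
  have hl3 : l < s t := hl
  set x0 := max δ ((l + s t) / 2) with hx0
  have a1 : x0 < s t := by apply max_lt hδ; linarith
  have a2 : l < x0 := lt_of_lt_of_le (by linarith) (le_max_right _ _)
  have a3 : δ ≤ x0 := le_max_left _ _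
  obtain ⟨c, hc1, hc2⟩ := exists_deriv_eq_slope (u t) a1
    ((sol_u_slice H ⟨ht.1.le, ht.2⟩).mono (Icc_subset_Icc (hδ0.trans a3) le_rfl))
    (fun x hx => (H.ux_diff t ht x ⟨(hδ0.trans a3).trans_lt hx.1, hx.2⟩).differentiableWithinAt)
  have b1 : deriv (u t) c < -K := hl2 ⟨a2.trans hc1.1, hc1.2.le⟩
  rw [hc2, H.bc_free t ht, div_lt_iff₀ (by linarith)] at b1
  have b2 := hK x0 ⟨a3, a1.le⟩
  linarith

lemma part3 (h0 : 0 < s₀) (hT : 0 < T)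
    (H : ∀ T' : ℝ, 0 < T' → T' < T → IsSolOn p s₀ φ T' s u) {C : ℝ}
    (hC : ∀ t ∈ Ico (T / 2) T, ∀ x ∈ Icc (s₀ / 2) (s t), u t x ≤ C) :
    ∃ L, Tendsto s (𝓝[<] T) (𝓝 L) := by
  set t₀ := T / 2 with ht₀
  have t₀0 : 0 < t₀ := by linarith
  have t₀T : t₀ < T := by linarith
  have H0 := H t₀ t₀0 t₀T
  have s0p := H0.s_pos t₀ ⟨t₀0.le, le_rfl⟩
  obtain ⟨B, hB⟩ := (isCompact_Icc (a := 0) (b := s t₀)).bddBelow_image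
    (sol_ux_slice H0 ⟨t₀0, le_rfl⟩)
  have hB' : ∀ x ∈ Icc 0 (s t₀), B ≤ deriv (u t₀) x := fun x hx => hB ⟨x, hx, rfl⟩
  set K := max (max (-B) 0) (2 * C / s₀) with hK
  have K0 : 0 ≤ K := (le_max_right _ _).trans (le_max_left _ _)
  have KB : -B ≤ K := (le_max_left _ _).trans (le_max_left _ _)
  have KC : 2 * C / s₀ ≤ K := le_max_right _ _
  rw [div_le_iff₀ h0] at KC
  have bound : ∀ t ∈ Ico t₀ T, ∀ x ∈ Icc (s₀ / 2) (s t), u t x ≤ K * (s t - x) := by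
    intro t ht
    have ht0 : 0 < t := by linarith [ht.1]
    have Ht := H t ht0 ht.2
    have ssm : ∀ τ ∈ Icc t₀ t, s₀ ≤ s τ := fun τ hτ => sol_s0 Ht (by linarith [hτ.1]) hτ.2
    have main := sol_comp Ht (t₀ := t₀) (t₁ := t) (δ := s₀ / 2) t₀0 le_rfl (by linarith) (by linarith)
      (v := fun τ y => K * (s τ - y)) (vt := fun τ y => K * deriv s τ) (vx := fun τ y => -K)
      (vxx := fun τ y => 0)
      (by
        apply continuousOn_const.mul
        have : ContinuousOn (fun q : ℝ × ℝ => s q.1)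
            {q : ℝ × ℝ | q.1 ∈ Icc t₀ t ∧ q.2 ∈ Icc (s₀ / 2) (s q.1)} :=
          Ht.s_cont.comp continuousOn_fst (fun q hq => ⟨by linarith [hq.1.1], hq.1.2⟩)
        exact this.sub continuousOn_snd)
      (fun τ hτ y hy => (((Ht.s_diff τ ⟨by linarith [hτ.1], hτ.2⟩).hasDerivAt).sub_const y).const_mul K)
      (fun τ hτ y hy => by
        refine (((hasDerivAt_id y).const_sub (s τ)).const_mul K).congr_deriv ?_
        ring)
      (fun τ hτ y hy => hasDerivAt_const _ _)
      (fun τ hτ y hy => by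
        have hτ' : τ ∈ Ioc 0 t := ⟨by linarith [hτ.1], hτ.2⟩
        rw [Ht.stefan τ hτ']
        exact mul_nonneg K0 (by linarith [sol_ux_le Ht hτ']))
      (by
        intro y hy
        have ft := sol_ftc H0 ⟨t₀0, le_rfl⟩ (by linarith [hy.1] : 0 ≤ y) hy.2 le_rfl
        rw [H0.bc_free t₀ ⟨t₀0, le_rfl⟩] at ft
        have : ∫ ξ in y..(s t₀), B ≤ ∫ ξ in y..(s t₀), deriv (u t₀) ξ := by
          apply intervalIntegral.integral_mono_on hy.2 intervalIntegrable_const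
          · apply ContinuousOn.intervalIntegrable
            rw [uIcc_of_le hy.2]
            exact (sol_ux_slice H0 ⟨t₀0, le_rfl⟩).mono (Icc_subset_Icc (by linarith [hy.1]) le_rfl)
          · exact fun x hx => hB' x ⟨by linarith [hy.1, hx.1], hx.2⟩
        rw [intervalIntegral.integral_const, smul_eq_mul] at this
        have : (s t₀ - y) * (-B) ≤ (s t₀ - y) * K :=
          mul_le_mul_of_nonneg_left KB (by linarith [hy.2])
        linarith)
      (by
        intro τ hτ
        have h1 := ssm τ hτ
        have h2 := hC τ ⟨hτ.1, by linarith [hτ.2, ht.2]⟩ (s₀ / 2) ⟨le_rfl, by linarith⟩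
        have : K * (s₀ / 2) ≤ K * (s τ - s₀ / 2) := by gcongr; linarith
        linarith)
      (fun τ hτ => by simp)
    exact main t ⟨ht.1, le_rfl⟩
  have sder : ∀ t ∈ Ico t₀ T, deriv s t ≤ K := by
    intro t ht
    have ht0 : 0 < t := by linarith [ht.1]
    have Ht := H t ht0 ht.2
    rw [Ht.stefan t ⟨ht0, le_rfl⟩]
    have := sol_ux_ge Ht ⟨ht0, le_rfl⟩ (by linarith : 0 ≤ s₀ / 2)
      (by linarith [sol_s0 Ht ht0.le le_rfl]) (bound t ht)
    linarith
  have sb : ∀ t ∈ Ico t₀ T, s t ≤ s t₀ + K * T := by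
    intro t ht
    have ht0 : 0 < t := by linarith [ht.1]
    have Ht := H t ht0 ht.2
    have := Convex.image_sub_le_mul_sub_of_deriv_le (convex_Icc t₀ t) (f := s) (C := K)
      (Ht.s_cont.mono (Icc_subset_Icc t₀0.le le_rfl))
      (by
        rw [interior_Icc]
        exact fun τ hτ => (Ht.s_diff τ ⟨by linarith [hτ.1], hτ.2.le⟩).differentiableWithinAt)
      (by
        rw [interior_Icc]
        exact fun τ hτ => sder τ ⟨hτ.1.le, by linarith [hτ.2, ht.2]⟩)
      t₀ ⟨le_rfl, ht.1⟩ t ⟨ht.1, le_rfl⟩ ht.1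
    have : K * (t - t₀) ≤ K * T := by gcongr; linarith [ht.2]
    linarith
  have mono : MonotoneOn s (Ioo t₀ T) := by
    intro a ha b hb hab
    exact sol_mono (H b (by linarith [hb.1]) hb.2) ⟨by linarith [ha.1], hab⟩
      ⟨by linarith [hb.1], le_rfl⟩ hab
  refine ⟨_, mono.tendsto_nhdsWithin_Ioo_left ⟨(t₀ + T) / 2, by constructor <;> linarith⟩ ?_⟩
  refine ⟨s t₀ + K * T, ?_⟩
  rintro _ ⟨t, ht, rfl⟩
  exact sb t ⟨ht.1.le, ht.2⟩

end comp



end partK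

/-- Proposition 3.3: blow-up rate, interior bound, and boundedness of the free
boundary at a finite blow-up time. -/
theorem stmt_14 (p : ℝ) (hp : 1 < p) (s₀ : ℝ) (φ : ℝ → ℝ) (hW : memW s₀ φ)
    (s : ℝ → ℝ) (u : ℝ → ℝ → ℝ) (Tm : ℝ≥0∞)
    (hmax : IsMaxSol p s₀ φ Tm s u) (hfin : Tm ≠ ⊤) :
    (∃ C : ℝ, ∀ t ∈ Ioo (Tm.toReal / 2) Tm.toReal,
      (Tm.toReal - t) ^ (1 / (2 * (p - 1))) * u t 0 ≤ C) ∧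
    (∀ δ ∈ Ioo 0 s₀, ∃ C : ℝ, ∀ t ∈ Ioo (Tm.toReal / 2) Tm.toReal,
      ∀ x ∈ Ioo δ (s t), u t x ≤ C) ∧
    (∃ L : ℝ, Tendsto s (𝓝[<] Tm.toReal) (𝓝 L)) := by
  obtain ⟨hT0, hsol, -⟩ := hmax
  have hT : 0 < Tm.toReal := ENNReal.toReal_pos hT0.ne' hfin
  have H : ∀ T' : ℝ, 0 < T' → T' < Tm.toReal → IsSolOn p s₀ φ T' s u := fun T' h1 h2 =>
    hsol T' h1 ((ENNReal.ofReal_lt_iff_lt_toReal h1.le hfin).2 h2)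
  have h0 := hW.1
  have β0 : 0 < 1 / (2 * (p - 1)) := by apply div_pos <;> linarith
  obtain ⟨C, hC⟩ := rate hp h0 (sol_Ab hp h0 H) hT
  have P2 : ∀ δ > 0, ∃ C', ∀ t ∈ Ico (Tm.toReal / 2) Tm.toReal, ∀ x ∈ Icc δ (s t), u t x ≤ C' :=
    fun δ hδ => part2 hp h0 hT H β0 hC hδ
  refine ⟨⟨C, fun t ht => hC t ⟨ht.1.le, ht.2⟩⟩, ?_, ?_⟩
  · intro δ hδ
    obtain ⟨C', hC'⟩ := P2 δ hδ.1
    exact ⟨C', fun t ht x hx => hC' t ⟨ht.1.le, ht.2⟩ x ⟨hx.1.le, hx.2.le⟩⟩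
  · obtain ⟨C', hC'⟩ := P2 (s₀ / 2) (by linarith)
    exact part3 h0 hT H hC'
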